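/- arXiv:1402.5739 — 11 statements merged into one kernel-verified Lean document; each statement's English description precedes it below -/
import Mathlib

section
/- For all integers w and k with w ≥ 3 and ⌈w/2⌉ ≤ k, there exists a comparability 3-hypergraph H with clique number ω(H) = w and chromatic number χ(H) ≥ k. -/
open scoped Classical

/-- A `3`-hypergraph: a finite vertex set together with a finite set of edges,
each edge intended to be a 3-element subset of the vertex set. -/
structure ThreeHypergraph (α : Type*) where
  verts : Finset α
  edges : Finset (Finset α)

namespace ThreeHypergraph

variable {α : Type*}

/-- The structural requirements on a `3`-hypergraph: every edge is a
3-element subset of the vertex set. -/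
def IsValid (H : ThreeHypergraph α) : Prop :=
  ∀ e ∈ H.edges, e.card = 3 ∧ e ⊆ H.verts

/-- A proper colouring with `k` colours: a partition of the vertices into (at most)
`k` colour classes such that no edge is contained in a single class. -/
def ProperColoring (H : ThreeHypergraph α) (k : ℕ) : Prop :=
  ∃ c : α → ℕ, (∀ v ∈ H.verts, c v < k) ∧
    ∀ e ∈ H.edges, ¬ ∃ i : ℕ, ∀ v ∈ e, c v = i

/-- The chromatic number: the least `k` admitting a proper colouring. -/
noncomputable def chromaticNumber (H : ThreeHypergraph α) : ℕ :=
  sInf {k | H.ProperColoring k}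

/-- A clique: a set of vertices all of whose 3-element subsets are edges. -/
def IsClique (H : ThreeHypergraph α) (S : Finset α) : Prop :=
  S ⊆ H.verts ∧ ∀ t ⊆ S, t.card = 3 → t ∈ H.edges

/-- The clique number: the largest cardinality of a clique. -/
noncomputable def cliqueNumber (H : ThreeHypergraph α) : ℕ :=
  sSup {m | ∃ S : Finset α, H.IsClique S ∧ S.card = m}

end ThreeHypergraph

variable {α : Type*}

/-- An orientation of a `3`-hypergraph: a set of ordered triples (given as a ternary
relation), closed under cyclic rotation, containing for each edge exactly one of the two
rotation classes of its three vertices, and containing no other triples. -/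
def IsOrientation [DecidableEq α] (H : ThreeHypergraph α) (O : α → α → α → Prop) : Prop :=
  (∀ u v w, O u v w → ({u, v, w} : Finset α) ∈ H.edges) ∧
  (∀ u v w, O u v w → O v w u) ∧
  (∀ u v w, ({u, v, w} : Finset α) ∈ H.edges → (O u v w ↔ ¬ O u w v))

/-- Transitivity for an oriented `3`-hypergraph: whenever `(u v z)` and `(z v w)` are
oriented edges, so is `(u v w)`. -/
def IsTransitiveRel (O : α → α → α → Prop) : Prop :=
  ∀ u v z w, O u v z → O z v w → O u v w

/-- A transitive orientation of a `3`-hypergraph. -/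
def IsTransitiveOrientation [DecidableEq α] (H : ThreeHypergraph α)
    (O : α → α → α → Prop) : Prop :=
  IsOrientation H O ∧ IsTransitiveRel O

/-- A comparability `3`-hypergraph: one admitting a transitive orientation. -/
def IsComparability [DecidableEq α] (H : ThreeHypergraph α) : Prop :=
  ∃ O : α → α → α → Prop, IsTransitiveOrientation H O

/-- A family of sets is linear if two distinct points lie in at most one member. -/
def IsLinearFamily {α : Type*} (L : Finset (Finset α)) : Prop :=
  ∀ e ∈ L, ∀ f ∈ L, ∀ a b, a ≠ b → a ∈ e → b ∈ e → a ∈ f → b ∈ f → e = f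

/-- Two distinct points lie on at most one combinatorial line. -/
theorem Combinatorics.Line.eq_of_two_points {α ι : Type*} (l m : Combinatorics.Line α ι)
    {a b c d : α} (hab : l a ≠ l b) (hac : l a = m c) (hbd : l b = m d) : l = m := by
  have hne : a ≠ b := fun h => hab (h ▸ rfl)
  have hcd : c ≠ d := fun h => hab (by rw [hac, hbd, h])
  ext1
  funext i
  have h1 := congrFun hac i
  have h2 := congrFun hbd i
  simp only [Combinatorics.Line.apply_def] at h1 h2
  cases hl : l.idxFun i <;> cases hm : m.idxFun i <;> simp_all

/-- For every number of colours there is a linear family of triples, avoiding any prescribed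
initial segment of `ℕ`, each colouring of which has a monochromatic member. -/
theorem exists_linear_triples_monochromatic (w k : ℕ) (hk : 0 < k) :
    ∃ L : Finset (Finset ℕ), (∀ e ∈ L, e.card = 3 ∧ ∀ x ∈ e, w ≤ x) ∧ IsLinearFamily L ∧
      ∀ c : ℕ → ℕ, (∀ e ∈ L, ∀ x ∈ e, c x < k) → ∃ e ∈ L, ∃ i, ∀ x ∈ e, c x = i := by
  obtain ⟨ι, _, hι⟩ := Combinatorics.Line.exists_mono_in_high_dimension (Fin 3) (Fin k)
  have := Fintype.ofFinite (ι → Fin 3)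
  let g : (ι → Fin 3) → ℕ := fun x => w + (Fintype.equivFin (ι → Fin 3) x : ℕ)
  have hg : Function.Injective g := fun x y h =>
    (Fintype.equivFin (ι → Fin 3)).injective (Fin.ext (Nat.add_left_cancel h))
  have : Finite (Combinatorics.Line (Fin 3) ι) :=
    Finite.of_injective (fun l : Combinatorics.Line (Fin 3) ι => l.idxFun)
      fun l m h => Combinatorics.Line.ext h
  have := Fintype.ofFinite (Combinatorics.Line (Fin 3) ι)
  let points : Combinatorics.Line (Fin 3) ι → Finset ℕ :=
    fun l => Finset.univ.image fun a => g (l a)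
  have hinj : ∀ l : Combinatorics.Line (Fin 3) ι, Function.Injective fun a => g (l a) := by
    intro l a b h
    obtain ⟨i, hi⟩ := l.proper
    have := congrFun (hg h) i
    simpa [Combinatorics.Line.apply_def, hi] using this
  refine ⟨Finset.univ.image points, ?_, ?_, ?_⟩
  · intro e he
    obtain ⟨l, -, rfl⟩ := Finset.mem_image.1 he
    refine ⟨by simp [points, Finset.card_image_of_injective _ (hinj l)], fun x hx => ?_⟩
    obtain ⟨a, -, rfl⟩ := Finset.mem_image.1 hx
    exact Nat.le_add_right _ _
  · intro e he f hf x y hxy hxe hye hxf hyf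
    obtain ⟨l, -, rfl⟩ := Finset.mem_image.1 he
    obtain ⟨m, -, rfl⟩ := Finset.mem_image.1 hf
    obtain ⟨a, -, rfl⟩ := Finset.mem_image.1 hxe
    obtain ⟨b, -, rfl⟩ := Finset.mem_image.1 hye
    obtain ⟨c, -, hc⟩ := Finset.mem_image.1 hxf
    obtain ⟨d, -, hd⟩ := Finset.mem_image.1 hyf
    rw [Combinatorics.Line.eq_of_two_points l m (a := a) (b := b) (c := c) (d := d)
      (fun h => hxy (congrArg g h))
      (hg hc).symm (hg hd).symm]
  · intro c hc
    have hlt : ∀ (l : Combinatorics.Line (Fin 3) ι) a, c (g (l a)) < k := fun l a =>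
      hc _ (Finset.mem_image_of_mem points (Finset.mem_univ l)) _
        (Finset.mem_image_of_mem _ (Finset.mem_univ a))
    obtain ⟨l, i, hi⟩ := hι fun x => if h : c (g x) < k then ⟨c (g x), h⟩ else ⟨0, hk⟩
    refine ⟨points l, Finset.mem_image_of_mem points (Finset.mem_univ l), i, fun x hx => ?_⟩
    obtain ⟨a, -, rfl⟩ := Finset.mem_image.1 hx
    simpa [hlt l a] using congrArg Fin.val (hi a)

namespace ThreeHypergraph

/-- The disjoint union of the complete `3`-hypergraph on `{0, …, w - 1}` and the triples `L`. -/
noncomputable def completeUnion (w : ℕ) (L : Finset (Finset ℕ)) : ThreeHypergraph ℕ where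
  verts := Finset.range w ∪ L.biUnion id
  edges := (Finset.range w).powersetCard 3 ∪ L

theorem mem_edges_completeUnion {w : ℕ} {L : Finset (Finset ℕ)} {e : Finset ℕ} :
    e ∈ (completeUnion w L).edges ↔ ((∀ x ∈ e, x < w) ∧ e.card = 3) ∨ e ∈ L := by
  simp [completeUnion, Finset.mem_powersetCard, Finset.subset_iff]

theorem completeUnion_isValid {w : ℕ} {L : Finset (Finset ℕ)} (hL : ∀ e ∈ L, e.card = 3) :
    (completeUnion w L).IsValid := by
  intro e he
  rcases mem_edges_completeUnion.1 he with ⟨h, h3⟩ | h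
  · exact ⟨h3, fun x hx => Finset.mem_union_left _ (Finset.mem_range.2 (h x hx))⟩
  · exact ⟨hL e h, fun x hx => Finset.mem_union_right _ (Finset.mem_biUnion.2 ⟨e, h, hx⟩)⟩

/-- The natural numbers `u`, `v`, `z` occur in this cyclic order. -/
def CyclicLT (u v z : ℕ) : Prop :=
  (u < v ∧ v < z) ∨ (v < z ∧ z < u) ∨ (z < u ∧ u < v)

theorem completeUnion_isComparability {w : ℕ} {L : Finset (Finset ℕ)}
    (hL : ∀ e ∈ L, e.card = 3 ∧ ∀ x ∈ e, w ≤ x) (hlin : IsLinearFamily L) :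
    IsComparability (completeUnion w L) := by
  refine ⟨fun u v z => {u, v, z} ∈ (completeUnion w L).edges ∧ CyclicLT u v z,
    ⟨fun u v z h => h.1, ?_, ?_⟩, ?_⟩
  · rintro u v z ⟨h, hc⟩
    refine ⟨?_, by unfold CyclicLT at *; omega⟩
    rwa [show ({v, z, u} : Finset ℕ) = {u, v, z} by ext; simp; tauto]
  · intro u v z h
    have h3 := (completeUnion_isValid (fun e he => (hL e he).1) _ h).1
    obtain ⟨huv, huz, hvz⟩ : u ≠ v ∧ u ≠ z ∧ v ≠ z := by
      refine ⟨?_, ?_, ?_⟩ <;> rintro rfl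
      · have := Finset.card_le_two (a := u) (b := z)
        simp_all
      · have := Finset.card_le_two (a := v) (b := u)
        simp_all
      · have := Finset.card_le_two (a := u) (b := v)
        simp_all
    have h' : ({u, z, v} : Finset ℕ) ∈ (completeUnion w L).edges := by
      rwa [show ({u, z, v} : Finset ℕ) = {u, v, z} by ext; simp; tauto]
    simp only [h, h', true_and]
    unfold CyclicLT
    omega
  · rintro u v z x ⟨h, hc⟩ ⟨h', hc'⟩
    have hc'' : CyclicLT u v x := by unfold CyclicLT at *; omega
    refine ⟨?_, hc''⟩
    rw [mem_edges_completeUnion] at h h' ⊢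
    rcases h with ⟨h, -⟩ | h <;> rcases h' with ⟨h', -⟩ | h'
    · refine Or.inl ⟨by simp_all, Finset.card_eq_three.2 ⟨u, v, x, ?_, ?_, ?_, rfl⟩⟩ <;>
        unfold CyclicLT at hc'' <;> omega
    · exact absurd ((hL _ h').2 v (by simp)) (not_le.2 (h v (by simp)))
    · exact absurd ((hL _ h).2 v (by simp)) (not_le.2 (h' v (by simp)))
    · have hvz : v ≠ z := by unfold CyclicLT at hc; omega
      have heq := hlin _ h _ h' v z hvz (by simp) (by simp) (by simp) (by simp)
      have hx : x ∈ ({u, v, z} : Finset ℕ) := by rw [heq]; simp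
      simp only [Finset.mem_insert, Finset.mem_singleton] at hx
      unfold CyclicLT at hc hc'
      omega

theorem completeUnion_cliqueNumber {w : ℕ} {L : Finset (Finset ℕ)} (hw : 3 ≤ w)
    (hlin : IsLinearFamily L) : (completeUnion w L).cliqueNumber = w := by
  refine IsGreatest.csSup_eq ⟨⟨Finset.range w, ⟨Finset.subset_union_left, fun t ht h3 => ?_⟩,
    Finset.card_range w⟩, ?_⟩
  · exact mem_edges_completeUnion.2 (Or.inl ⟨fun x hx => Finset.mem_range.1 (ht hx), h3⟩)
  · rintro m ⟨S, ⟨-, hS⟩, rfl⟩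
    by_cases hlt : S ⊆ Finset.range w
    · simpa using Finset.card_le_card hlt
    obtain ⟨x, hxS, hx⟩ := Finset.not_subset.1 hlt
    rw [Finset.mem_range, not_lt] at hx
    by_contra! hcard
    have h2 : 2 < (S.erase x).card := by rw [Finset.card_erase_of_mem hxS]; omega
    obtain ⟨a, b, c, ha, hb, hc, hab, hac, hbc⟩ := Finset.two_lt_card_iff.1 h2
    rw [Finset.mem_erase] at ha hb hc
    have key : ∀ y ∈ S, y ≠ x → a ≠ y → ({x, a, y} : Finset ℕ) ∈ L := by
      intro y hy hyx hay
      have hmem := hS {x, a, y}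
        (by simp [Finset.insert_subset_iff, hxS, ha.2, hy])
        (Finset.card_eq_three.2 ⟨x, a, y, ha.1.symm, hyx.symm, hay, rfl⟩)
      rcases mem_edges_completeUnion.1 hmem with ⟨h, -⟩ | h
      · exact absurd hx (not_le.2 (h x (by simp)))
      · exact h
    have heq := hlin _ (key b hb.2 hb.1 hab) _ (key c hc.2 hc.1 hac) x a ha.1.symm
      (by simp) (by simp) (by simp) (by simp)
    have hbm : b ∈ ({x, a, c} : Finset ℕ) := by rw [← heq]; simp
    simp only [Finset.mem_insert, Finset.mem_singleton] at hbm
    exact hbm.elim hb.1 fun h => h.elim hab.symm hbc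

/-- A lower bound for the chromatic number of a valid `3`-hypergraph. -/
theorem le_chromaticNumber {H : ThreeHypergraph ℕ} (hH : H.IsValid) {k : ℕ}
    (h : ∀ m, H.ProperColoring m → k ≤ m) : k ≤ H.chromaticNumber := by
  refine le_csInf ⟨H.verts.sup id + 1, id, fun v hv => ?_, ?_⟩ h
  · exact Nat.lt_succ_of_le (Finset.le_sup (f := id) hv)
  · rintro e he ⟨i, hi⟩
    have h1 : e.card ≤ 1 :=
      Finset.card_le_one.2 fun a ha b hb => (hi a ha).trans (hi b hb).symm
    have := (hH e he).1
    omega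

end ThreeHypergraph

/-- For all integers `w ≥ 3` and `k ≥ ⌈w/2⌉`, there is a comparability 3-hypergraph
with clique number `w` and chromatic number at least `k`. -/
theorem exists_comparability_large_chromatic (w k : ℕ) (hw : 3 ≤ w) (hk : (w + 1) / 2 ≤ k) :
    ∃ H : ThreeHypergraph ℕ, H.IsValid ∧ IsComparability H ∧
      H.cliqueNumber = w ∧ k ≤ H.chromaticNumber := by
  obtain ⟨L, hL, hlin, hmono⟩ := exists_linear_triples_monochromatic w k (by omega)
  have hvalid := ThreeHypergraph.completeUnion_isValid (w := w) fun e he => (hL e he).1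
  refine ⟨.completeUnion w L, hvalid, ThreeHypergraph.completeUnion_isComparability hL hlin,
    ThreeHypergraph.completeUnion_cliqueNumber hw hlin,
    ThreeHypergraph.le_chromaticNumber hvalid ?_⟩
  rintro m ⟨c, hc, hproper⟩
  by_contra! hm
  have hedge : ∀ e ∈ L, e ∈ (ThreeHypergraph.completeUnion w L).edges := fun e he =>
    ThreeHypergraph.mem_edges_completeUnion.2 (Or.inr he)
  obtain ⟨e, he, hi⟩ := hmono c fun e he x hx =>
    (hc x ((hvalid e (hedge e he)).2 hx)).trans hm
  exact hproper e (hedge e he) hi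
end

section
/- If H is a comparability 3-hypergraph, then the Mycielski-type 3-hypergraph μ(H) is also a comparability 3-hypergraph. More precisely, given a transitive orientation O(H) of H, the orientation O(μ(H)) defined by: (i) each edge {(u,1),(u,2),w} of E₂ is oriented as ((u,1) (u,2) w), and (ii) each edge {(u₁,t₁),(u₂,t₂),(u₃,t₃)} of E₁ is oriented as ((u₁,t₁) (u₂,t₂) (u₃,t₃)) if and only if (u₁ u₂ u₃) ∈ O(H), is a transitive orientation of μ(H). -/
open scoped Classical

variable {α : Type*}

/-- The Mycielski-type `3`-hypergraph `μ(H)`: vertices are two copies of `V(H)`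
(encoded as `some (v, 0)` and `some (v, 1)`) together with a new vertex `w = none`;
edges are the triples projecting onto an edge of `H` (`E₁`) together with the triples
`{(u,1), (u,2), w}` for `u ∈ V(H)` (`E₂`). -/
noncomputable def mycielski {α : Type*} [DecidableEq α] (H : ThreeHypergraph α) :
    ThreeHypergraph (Option (α × Fin 2)) where
  verts := (H.verts ×ˢ (Finset.univ : Finset (Fin 2))).image some ∪ {none}
  edges := (Finset.powersetCard 3
      ((H.verts ×ˢ (Finset.univ : Finset (Fin 2))).image some ∪ {none})).filter
    (fun e =>
      (∃ u₁ u₂ u₃ : α, ∃ t₁ t₂ t₃ : Fin 2, ({u₁, u₂, u₃} : Finset α) ∈ H.edges ∧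
        e = {some (u₁, t₁), some (u₂, t₂), some (u₃, t₃)}) ∨
      (∃ u : α, u ∈ H.verts ∧ e = {some (u, 0), some (u, 1), none}))

/-- The orientation of `μ(H)` induced by an orientation `O` of `H`:
each `E₂` edge `{(u,1), (u,2), w}` is oriented as `((u,1) (u,2) w)` (together with its
cyclic rotations), and each `E₁` edge is oriented as `((u₁,t₁) (u₂,t₂) (u₃,t₃))` iff
`(u₁ u₂ u₃) ∈ O`. -/
inductive mycOrient {α : Type*} (H : ThreeHypergraph α) (O : α → α → α → Prop) :
    Option (α × Fin 2) → Option (α × Fin 2) → Option (α × Fin 2) → Prop where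
  | e2a (u : α) (hu : u ∈ H.verts) : mycOrient H O (some (u, 0)) (some (u, 1)) none
  | e2b (u : α) (hu : u ∈ H.verts) : mycOrient H O (some (u, 1)) none (some (u, 0))
  | e2c (u : α) (hu : u ∈ H.verts) : mycOrient H O none (some (u, 0)) (some (u, 1))
  | e1 (u₁ u₂ u₃ : α) (t₁ t₂ t₃ : Fin 2) (h : O u₁ u₂ u₃) :
      mycOrient H O (some (u₁, t₁)) (some (u₂, t₂)) (some (u₃, t₃))

section Orientation

variable {H : ThreeHypergraph α} {O : α → α → α → Prop}

theorem mycOrient_some_iff {u v w : α} {r s t : Fin 2} :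
    mycOrient H O (some (u, r)) (some (v, s)) (some (w, t)) ↔ O u v w :=
  ⟨fun h => by cases h; assumption, fun h => .e1 _ _ _ _ _ _ h⟩

theorem mycOrient_rotate (hO : ∀ u v w, O u v w → O v w u) {a b c : Option (α × Fin 2)}
    (h : mycOrient H O a b c) : mycOrient H O b c a := by
  cases h with
  | e2a u hu => exact .e2b u hu
  | e2b u hu => exact .e2c u hu
  | e2c u hu => exact .e2a u hu
  | e1 _ _ _ _ _ _ h => exact .e1 _ _ _ _ _ _ (hO _ _ _ h)

theorem mycOrient_rotate_iff (hO : ∀ u v w, O u v w → O v w u) {a b c : Option (α × Fin 2)} :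
    mycOrient H O a b c ↔ mycOrient H O b c a :=
  ⟨mycOrient_rotate hO, fun h => mycOrient_rotate hO (mycOrient_rotate hO h)⟩

variable [DecidableEq α]

theorem ThreeHypergraph.IsValid.pairwise_ne (hH : H.IsValid) {u v w : α}
    (h : ({u, v, w} : Finset α) ∈ H.edges) : u ≠ v ∧ u ≠ w ∧ v ≠ w := by
  have hc := (hH _ h).1
  have two (a b : α) : ({a, b} : Finset α).card ≠ 3 := by
    have := Finset.card_le_two (a := a) (b := b)
    omega
  refine ⟨?_, ?_, ?_⟩ <;> rintro rfl
  · exact two u w (by simpa using hc)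
  · exact two v u (by simpa using hc)
  · exact two u v (by simpa using hc)

theorem mem_mycielski_edges {e : Finset (Option (α × Fin 2))} :
    e ∈ (mycielski H).edges ↔
      (e ⊆ (mycielski H).verts ∧ e.card = 3) ∧
      ((∃ u₁ u₂ u₃ : α, ∃ t₁ t₂ t₃ : Fin 2, ({u₁, u₂, u₃} : Finset α) ∈ H.edges ∧
        e = {some (u₁, t₁), some (u₂, t₂), some (u₃, t₃)}) ∨
      (∃ u : α, u ∈ H.verts ∧ e = {some (u, 0), some (u, 1), none})) := by
  simp only [mycielski, Finset.mem_filter, Finset.mem_powersetCard]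

theorem some_mem_mycielski_verts {u : α} {t : Fin 2} :
    some (u, t) ∈ (mycielski H).verts ↔ u ∈ H.verts := by
  simp [mycielski]

theorem none_mem_mycielski_verts : none ∈ (mycielski H).verts := by
  simp [mycielski]

theorem pair_none_mem_mycielski_edges {u : α} (hu : u ∈ H.verts) :
    ({some (u, 0), some (u, 1), none} : Finset (Option (α × Fin 2))) ∈ (mycielski H).edges := by
  refine mem_mycielski_edges.2 ⟨⟨?_, ?_⟩, Or.inr ⟨u, hu, rfl⟩⟩
  · simp [Finset.insert_subset_iff, some_mem_mycielski_verts, none_mem_mycielski_verts, hu]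
  · exact Finset.card_eq_three.2 ⟨_, _, _, by simp, by simp, by simp, rfl⟩

theorem lift_mem_mycielski_edges (hH : H.IsValid) {u v w : α} (r s t : Fin 2)
    (h : ({u, v, w} : Finset α) ∈ H.edges) :
    ({some (u, r), some (v, s), some (w, t)} : Finset (Option (α × Fin 2))) ∈
      (mycielski H).edges := by
  obtain ⟨huv, huw, hvw⟩ := hH.pairwise_ne h
  have hs := (hH _ h).2
  simp only [Finset.insert_subset_iff, Finset.singleton_subset_iff] at hs
  refine mem_mycielski_edges.2 ⟨⟨?_, ?_⟩, Or.inl ⟨u, v, w, r, s, t, h, rfl⟩⟩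
  · simp [Finset.insert_subset_iff, some_mem_mycielski_verts, hs]
  · exact Finset.card_eq_three.2 ⟨_, _, _, by simp [huv], by simp [huw], by simp [hvw], rfl⟩

/-- An edge of `μ(H)` avoiding the apex projects onto an edge of `H`. -/
theorem proj_mem_edges {u v w : α} {r s t : Fin 2}
    (h : ({some (u, r), some (v, s), some (w, t)} : Finset (Option (α × Fin 2))) ∈
      (mycielski H).edges) : ({u, v, w} : Finset α) ∈ H.edges := by
  obtain ⟨-, ⟨u₁, u₂, u₃, t₁, t₂, t₃, he, heq⟩ | ⟨x, -, heq⟩⟩ := mem_mycielski_edges.1 h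
  · have himg := congrArg (Finset.image (Option.map Prod.fst)) heq
    have hsome : ({u, v, w} : Finset α).image some = ({u₁, u₂, u₃} : Finset α).image some := by
      simpa [Finset.image_insert] using himg
    rwa [Finset.image_injective (Option.some_injective _) hsome]
  · have : none ∈ ({some (x, 0), some (x, 1), none} : Finset (Option (α × Fin 2))) := by simp
    rw [← heq] at this
    simp at this

/-- An edge of `μ(H)` through the apex joins it to the two copies of one vertex. -/
theorem apex_edge {a b : Option (α × Fin 2)}
    (h : ({none, a, b} : Finset (Option (α × Fin 2))) ∈ (mycielski H).edges) :
    ∃ x ∈ H.verts, (a = some (x, 0) ∧ b = some (x, 1)) ∨ (a = some (x, 1) ∧ b = some (x, 0)) := by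
  obtain ⟨-, ⟨u₁, u₂, u₃, t₁, t₂, t₃, -, heq⟩ | ⟨x, hx, heq⟩⟩ := mem_mycielski_edges.1 h
  · have : none ∈ ({none, a, b} : Finset (Option (α × Fin 2))) := by simp
    rw [heq] at this
    simp at this
  · have h0 : some (x, 0) ∈ ({none, a, b} : Finset (Option (α × Fin 2))) := by simp [heq]
    have h1 : some (x, 1) ∈ ({none, a, b} : Finset (Option (α × Fin 2))) := by simp [heq]
    simp only [Finset.mem_insert, Finset.mem_singleton, reduceCtorEq, false_or] at h0 h1
    refine ⟨x, hx, ?_⟩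
    have hne : (some (x, 0) : Option (α × Fin 2)) ≠ some (x, 1) := by simp
    rcases h0 with h0 | h0 <;> rcases h1 with h1 | h1
    · exact absurd (h0.trans h1.symm) hne
    · exact Or.inl ⟨h0.symm, h1.symm⟩
    · exact Or.inr ⟨h1.symm, h0.symm⟩
    · exact absurd (h0.trans h1.symm) hne

theorem mycOrient_apex_iff_not {a b : Option (α × Fin 2)}
    (h : ({none, a, b} : Finset (Option (α × Fin 2))) ∈ (mycielski H).edges) :
    mycOrient H O none a b ↔ ¬ mycOrient H O none b a := by
  obtain ⟨x, hx, ⟨rfl, rfl⟩ | ⟨rfl, rfl⟩⟩ := apex_edge h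
  · exact iff_of_true (.e2c x hx) (by rintro ⟨⟩)
  · exact iff_of_false (by rintro ⟨⟩) (not_not.2 (.e2c x hx))

theorem isOrientation_mycOrient (hH : H.IsValid) (hO : IsOrientation H O) :
    IsOrientation (mycielski H) (mycOrient H O) := by
  obtain ⟨hmem, hrot, hex⟩ := hO
  have rotate_set (a b c : Option (α × Fin 2)) :
      ({a, b, c} : Finset (Option (α × Fin 2))) = {b, c, a} := by
    ext; simp only [Finset.mem_insert, Finset.mem_singleton]; tauto
  refine ⟨fun a b c h => ?_, fun _ _ _ => mycOrient_rotate hrot, fun a b c h => ?_⟩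
  · cases h with
    | e2a u hu => exact pair_none_mem_mycielski_edges hu
    | e2b u hu => rw [← rotate_set]; exact pair_none_mem_mycielski_edges hu
    | e2c u hu => rw [rotate_set]; exact pair_none_mem_mycielski_edges hu
    | e1 _ _ _ _ _ _ h => exact lift_mem_mycielski_edges hH _ _ _ (hmem _ _ _ h)
  · rcases a with _ | ⟨u, r⟩
    · exact mycOrient_apex_iff_not h
    rcases b with _ | ⟨v, s⟩
    · rw [mycOrient_rotate_iff hrot, ← mycOrient_rotate_iff hrot (a := none)]
      exact mycOrient_apex_iff_not (by rwa [← rotate_set])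
    rcases c with _ | ⟨w, t⟩
    · rw [← mycOrient_rotate_iff hrot (a := none), mycOrient_rotate_iff hrot (b := none)]
      exact mycOrient_apex_iff_not (by rwa [rotate_set])
    rw [mycOrient_some_iff, mycOrient_some_iff]
    exact hex _ _ _ (proj_mem_edges h)

theorem isTransitiveRel_mycOrient (hH : H.IsValid) (hO : IsTransitiveOrientation H O) :
    IsTransitiveRel (mycOrient H O) := by
  obtain ⟨⟨hmem, -, -⟩, htrans⟩ := hO
  intro a b z c hab hbc
  cases hab with
  | e2a u hu => cases hbc
  | e2b u hu => cases hbc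
  | e2c u hu =>
    cases hbc with
    | e1 _ _ _ _ _ _ h => exact absurd rfl (hH.pairwise_ne (hmem _ _ _ h)).1
  | e1 u₁ u₂ u₃ _ _ _ h =>
    cases hbc with
    | e2a => exact absurd rfl (hH.pairwise_ne (hmem _ _ _ h)).2.2
    | e1 _ _ _ _ _ _ h' => exact .e1 _ _ _ _ _ _ (htrans _ _ _ _ h h')

end Orientation

/-- Given a transitive orientation `O` of `H`, the induced orientation of `μ(H)` is a
transitive orientation; consequently, if `H` is a comparability 3-hypergraph then so
is `μ(H)`. -/
theorem mycielski_comparability {α : Type*} [DecidableEq α] (H : ThreeHypergraph α)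
    (hH : H.IsValid) :
    (∀ O : α → α → α → Prop, IsTransitiveOrientation H O →
      IsTransitiveOrientation (mycielski H) (mycOrient H O)) ∧
    (IsComparability H → IsComparability (mycielski H)) := by
  have key (O : α → α → α → Prop) (hO : IsTransitiveOrientation H O) :
      IsTransitiveOrientation (mycielski H) (mycOrient H O) :=
    ⟨isOrientation_mycOrient hH hO.1, isTransitiveRel_mycOrient hH hO⟩
  exact ⟨key, fun ⟨O, hO⟩ => ⟨_, key O hO⟩⟩
end

section
/- For every 3-hypergraph H with clique number ω(H) ≥ 3, the clique number of the Mycielski-type 3-hypergraph μ(H) equals that of H: ω(μ(H)) = ω(H). -/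
open scoped Classical

namespace ThreeHypergraph

theorem bddAbove_card_isClique {α : Type*} (H : ThreeHypergraph α) :
    BddAbove {m | ∃ S : Finset α, H.IsClique S ∧ S.card = m} := by
  refine ⟨H.verts.card, ?_⟩
  rintro _ ⟨S, hS, rfl⟩
  exact Finset.card_le_card hS.1

theorem IsClique.card_le_cliqueNumber {α : Type*} {H : ThreeHypergraph α} {S : Finset α}
    (hS : H.IsClique S) : S.card ≤ H.cliqueNumber :=
  le_csSup H.bddAbove_card_isClique ⟨S, hS, rfl⟩

theorem cliqueNumber_le {α : Type*} {H : ThreeHypergraph α} {n : ℕ}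
    (h : ∀ S, H.IsClique S → S.card ≤ n) : H.cliqueNumber ≤ n := by
  refine csSup_le ⟨0, ∅, ⟨by simp, ?_⟩, rfl⟩ ?_
  · intro t ht ht3
    simp [Finset.subset_empty.mp ht] at ht3
  · rintro _ ⟨S, hS, rfl⟩
    exact h S hS

end ThreeHypergraph

section Mycielski

variable {α : Type*} [DecidableEq α] {H : ThreeHypergraph α}

/-- An edge of `μ(H)` avoiding the apex projects onto an edge of `H`. -/
theorem image_fst_mem_edges_of_mem_mycielski {T : Finset (α × Fin 2)}
    (h : T.image some ∈ (mycielski H).edges) : T.image Prod.fst ∈ H.edges := by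
  simp only [mycielski, Finset.mem_filter] at h
  rcases h.2 with ⟨u₁, u₂, u₃, t₁, t₂, t₃, hu, he⟩ | ⟨u, -, he⟩
  · have hT : T = {(u₁, t₁), (u₂, t₂), (u₃, t₃)} := by
      apply Finset.image_injective (Option.some_injective _)
      simpa using he
    simpa [hT] using hu
  · have : none ∈ T.image some := he ▸ by simp
    simp at this

/-- Two vertices forming an edge of `μ(H)` with the apex are copies of the same vertex. -/
theorem fst_eq_of_apex_mem_mycielski {a b : α × Fin 2}
    (h : {none, some a, some b} ∈ (mycielski H).edges) : a.1 = b.1 := by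
  simp only [mycielski, Finset.mem_filter] at h
  rcases h.2 with ⟨u₁, u₂, u₃, t₁, t₂, t₃, -, he⟩ | ⟨u, -, he⟩
  · have : (none : Option (α × Fin 2)) ∈ ({none, some a, some b} : Finset _) := by simp
    simp [he] at this
  · have ha : some a ∈ ({none, some a, some b} : Finset (Option (α × Fin 2))) := by simp
    have hb : some b ∈ ({none, some a, some b} : Finset (Option (α × Fin 2))) := by simp
    rw [he] at ha hb
    simp only [Finset.mem_insert, Finset.mem_singleton, Option.some.injEq, reduceCtorEq,
      or_false] at ha hb
    rcases ha with rfl | rfl <;> rcases hb with rfl | rfl <;> rfl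

/-- The copy of a clique of `H` in the first layer is a clique of `μ(H)`. -/
theorem ThreeHypergraph.IsClique.mycielski {S : Finset α} (hS : H.IsClique S) :
    (mycielski H).IsClique (S.image fun v => some (v, 0)) := by
  have hsub : (S.image fun v => some (v, (0 : Fin 2))) ⊆ (_root_.mycielski H).verts := by
    intro x hx
    obtain ⟨v, hv, rfl⟩ := Finset.mem_image.mp hx
    simp [_root_.mycielski, hS.1 hv]
  refine ⟨hsub, fun t ht ht3 => ?_⟩
  refine Finset.mem_filter.mpr ⟨Finset.mem_powersetCard.mpr ⟨ht.trans hsub, ht3⟩, Or.inl ?_⟩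
  obtain ⟨T, hT, rfl⟩ := Finset.subset_image_iff.mp ht
  have hinj : Function.Injective fun v : α => some (v, (0 : Fin 2)) := fun a b hab => by
    simpa using hab
  rw [Finset.card_image_of_injective _ hinj] at ht3
  have hTe := hS.2 T hT ht3
  obtain ⟨a, b, c, -, -, -, rfl⟩ := Finset.card_eq_three.mp ht3
  exact ⟨a, b, c, 0, 0, 0, hTe, by simp⟩

/-- A clique of `μ(H)` with more than three vertices avoids the apex. -/
theorem ThreeHypergraph.IsClique.none_notMem {S : Finset (Option (α × Fin 2))}
    (hS : (_root_.mycielski H).IsClique S) (h3 : 3 < S.card) : none ∉ S := by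
  intro hn
  have hcard : 2 < (S.erase none).card := by
    rw [Finset.card_erase_of_mem hn]; omega
  obtain ⟨x, hx, y, hy, z, hz, hxy, hxz, hyz⟩ := Finset.two_lt_card.mp hcard
  rw [Finset.mem_erase] at hx hy hz
  obtain ⟨a, rfl⟩ := Option.ne_none_iff_exists'.mp hx.1
  obtain ⟨b, rfl⟩ := Option.ne_none_iff_exists'.mp hy.1
  obtain ⟨c, rfl⟩ := Option.ne_none_iff_exists'.mp hz.1
  have key : ∀ p q : α × Fin 2, some p ∈ S → some q ∈ S → p ≠ q → p.1 = q.1 := by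
    intro p q hp hq hpq
    refine fst_eq_of_apex_mem_mycielski (hS.2 _ ?_ ?_)
    · simp [Finset.insert_subset_iff, hn, hp, hq]
    · exact Finset.card_eq_three.mpr ⟨_, _, _, by simp, by simp, by simpa using hpq, rfl⟩
  have hab := key a b hx.2 hy.2 (by simpa using hxy)
  have hac := key a c hx.2 hz.2 (by simpa using hxz)
  simp only [ne_eq, Option.some.injEq, Prod.ext_iff] at hxy hxz hyz
  grind

/-- The projection to `H` is injective on a clique of `μ(H)` with at least three vertices that
avoids the apex. -/
theorem ThreeHypergraph.IsClique.injOn_fst (hH : H.IsValid) {T : Finset (α × Fin 2)}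
    (hT : (_root_.mycielski H).IsClique (T.image some)) (h3 : 3 ≤ T.card) :
    Set.InjOn Prod.fst (T : Set (α × Fin 2)) := by
  intro a ha b hb hab
  by_contra hne
  obtain ⟨U, habU, hUT, hU3⟩ : ∃ U, {a, b} ⊆ U ∧ U ⊆ T ∧ U.card = 3 :=
    Finset.exists_subsuperset_card_eq
      (by simpa [Finset.insert_subset_iff] using And.intro ha hb)
      (Finset.card_le_two.trans (by norm_num)) h3
  have hedge := image_fst_mem_edges_of_mem_mycielski (hT.2 _ (Finset.image_subset_image hUT)
    (by rw [Finset.card_image_of_injective _ (Option.some_injective _), hU3]))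
  have hinj : Set.InjOn Prod.fst (U : Set (α × Fin 2)) :=
    Finset.card_image_iff.mp ((hH _ hedge).1.trans hU3.symm)
  exact hne (hinj (habU (by simp)) (habU (by simp)) hab)

/-- The projection to `H` of a clique of `μ(H)` avoiding the apex, on which the projection is
injective, is a clique of `H`. -/
theorem ThreeHypergraph.IsClique.image_fst {T : Finset (α × Fin 2)}
    (hT : (_root_.mycielski H).IsClique (T.image some))
    (hinj : Set.InjOn Prod.fst (T : Set (α × Fin 2))) : H.IsClique (T.image Prod.fst) := by
  refine ⟨fun v hv => ?_, fun t ht ht3 => ?_⟩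
  · obtain ⟨p, hp, rfl⟩ := Finset.mem_image.mp hv
    have := hT.1 (Finset.mem_image_of_mem some hp)
    simpa [_root_.mycielski] using this
  · obtain ⟨U, hU, rfl⟩ := Finset.subset_image_iff.mp ht
    refine image_fst_mem_edges_of_mem_mycielski (hT.2 _ (Finset.image_subset_image hU) ?_)
    rwa [Finset.card_image_of_injective _ (Option.some_injective _),
      ← Finset.card_image_of_injOn (hinj.mono (Finset.coe_subset.mpr hU))]

end Mycielski

/-- For every 3-hypergraph `H` with clique number at least `3`,
`ω(μ(H)) = ω(H)`. -/
theorem cliqueNumber_mycielski {α : Type*} [DecidableEq α] (H : ThreeHypergraph α)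
    (hH : H.IsValid) (hω : 3 ≤ H.cliqueNumber) :
    (mycielski H).cliqueNumber = H.cliqueNumber := by
  apply le_antisymm
  · refine ThreeHypergraph.cliqueNumber_le fun S hS => ?_
    rcases le_or_gt S.card 3 with h3 | h3
    · exact h3.trans hω
    have hn := hS.none_notMem h3
    obtain ⟨T, rfl⟩ : ∃ T : Finset (α × Fin 2), S = T.image some :=
      ⟨S.eraseNone, by rw [Finset.image_some_eraseNone, Finset.erase_eq_of_notMem hn]⟩
    rw [Finset.card_image_of_injective _ (Option.some_injective _)] at h3 ⊢
    have hinj := hS.injOn_fst hH h3.le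
    rw [← Finset.card_image_of_injOn hinj]
    exact (hS.image_fst hinj).card_le_cliqueNumber
  · refine ThreeHypergraph.cliqueNumber_le fun S hS => ?_
    have hinj : Function.Injective fun v : α => some (v, (0 : Fin 2)) := fun a b hab => by
      simpa using hab
    rw [← Finset.card_image_of_injective S hinj]
    exact hS.mycielski.card_le_cliqueNumber
end

section
/- For every 3-hypergraph H with nonempty vertex set, the chromatic number of the Mycielski-type 3-hypergraph μ(H) is one more than that of H: χ(μ(H)) = χ(H) + 1. -/
open scoped Classical

namespace ThreeHypergraph

/-- Every valid `3`-hypergraph has a proper colouring: colour the vertices injectively. -/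
theorem IsValid.exists_properColoring {α : Type*} {H : ThreeHypergraph α} (hH : H.IsValid) :
    ∃ k, H.ProperColoring k := by
  refine ⟨H.verts.card, fun v => if h : v ∈ H.verts then H.verts.equivFin ⟨v, h⟩ else 0,
    fun v hv => by simp [hv], ?_⟩
  rintro e he ⟨i, hi⟩
  obtain ⟨hcard, hsub⟩ := hH e he
  obtain ⟨a, ha, b, hb, hab⟩ := Finset.one_lt_card.mp (by omega : 1 < e.card)
  have h := (hi a ha).trans (hi b hb).symm
  simp only [hsub ha, hsub hb, dite_true] at h
  exact hab (by simpa using H.verts.equivFin.injective (Fin.ext h))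

variable {α : Type*} [DecidableEq α] {H : ThreeHypergraph α}

/-- Colour both copies of a vertex like the vertex itself, and `w` with a new colour. -/
theorem ProperColoring.mycielski {k : ℕ} (h : H.ProperColoring k) :
    (mycielski H).ProperColoring (k + 1) := by
  obtain ⟨c, hc, hce⟩ := h
  refine ⟨fun x => x.elim k fun p => c p.1, ?_, ?_⟩
  · rintro (_ | ⟨v, t⟩) hv
    · simp
    · have hv' : v ∈ H.verts := by simpa [_root_.mycielski] using hv
      exact (hc v hv').trans k.lt_succ_self
  · rintro e he ⟨i, hi⟩
    rcases (Finset.mem_filter.mp he).2 with ⟨u₁, u₂, u₃, t₁, t₂, t₃, hu, rfl⟩ | ⟨u, hu, rfl⟩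
    · refine hce _ hu ⟨i, ?_⟩
      simpa using hi
    · have h₀ := hi (some (u, 0)) (by simp)
      have hw := hi none (by simp)
      have := hc u hu
      simp only [Option.elim_some, Option.elim_none] at h₀ hw
      omega

/-- Colour each vertex like one of its copies coloured differently from `w`, then exchange the
colour of `w` with the last colour. -/
theorem IsValid.properColoring_of_mycielski (hH : H.IsValid) {k : ℕ}
    (h : (_root_.mycielski H).ProperColoring (k + 1)) : H.ProperColoring k := by
  obtain ⟨d, hd, hde⟩ := h
  have hw : d none < k + 1 := hd none (by simp [_root_.mycielski])
  have hcopy : ∀ v, ∃ t : Fin 2, v ∈ H.verts → d (some (v, t)) ≠ d none := by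
    intro v
    by_contra! hcon
    have hv := (hcon 0).1
    refine hde {some (v, 0), some (v, 1), none} ?_ ⟨d none, by simp [(hcon 0).2, (hcon 1).2]⟩
    refine Finset.mem_filter.mpr ⟨Finset.mem_powersetCard.mpr ⟨?_, ?_⟩, Or.inr ⟨v, hv, rfl⟩⟩
    · simp [Finset.insert_subset_iff, hv]
    · exact Finset.card_eq_three.mpr ⟨_, _, _, by simp, by simp, by simp, rfl⟩
  choose t ht using hcopy
  refine ⟨fun v => Equiv.swap (d none) k (d (some (v, t v))), fun v hv => ?_, ?_⟩
  · have hlt : d (some (v, t v)) < k + 1 := hd _ (by simp [_root_.mycielski, hv])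
    have hne := ht v hv
    simp only [Equiv.swap_apply_def]
    split_ifs <;> omega
  · rintro e he ⟨i, hi⟩
    obtain ⟨hcard, hsub⟩ := hH e he
    obtain ⟨u₁, u₂, u₃, h₁₂, h₁₃, h₂₃, rfl⟩ := Finset.card_eq_three.mp hcard
    simp only [Finset.insert_subset_iff, Finset.singleton_subset_iff] at hsub
    refine hde {some (u₁, t u₁), some (u₂, t u₂), some (u₃, t u₃)} ?_
      ⟨(Equiv.swap (d none) k).symm i, ?_⟩
    · refine Finset.mem_filter.mpr ⟨Finset.mem_powersetCard.mpr ⟨?_, ?_⟩,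
        Or.inl ⟨u₁, u₂, u₃, t u₁, t u₂, t u₃, ?_, rfl⟩⟩
      · simp [Finset.insert_subset_iff, hsub]
      · exact Finset.card_eq_three.mpr
          ⟨_, _, _, by simp [h₁₂], by simp [h₁₃], by simp [h₂₃], rfl⟩
      · convert he
    · simp only [Equiv.eq_symm_apply]
      simpa using hi

end ThreeHypergraph

/-- For every 3-hypergraph `H` with nonempty vertex set,
`χ(μ(H)) = χ(H) + 1`. -/
theorem chromaticNumber_mycielski {α : Type*} [DecidableEq α] (H : ThreeHypergraph α)
    (hH : H.IsValid) (hne : H.verts.Nonempty) :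
    (mycielski H).chromaticNumber = H.chromaticNumber + 1 := by
  apply le_antisymm
  · exact Nat.sInf_le (ThreeHypergraph.ProperColoring.mycielski
      (Nat.sInf_mem hH.exists_properColoring))
  · obtain ⟨k, hk⟩ := hH.exists_properColoring
    refine le_csInf ⟨k + 1, hk.mycielski⟩ ?_
    rintro (_ | n) hn
    · obtain ⟨d, hd, -⟩ := hn
      exact absurd (hd none (by simp [mycielski])) (Nat.not_lt_zero _)
    · exact Nat.succ_le_succ (Nat.sInf_le (hH.properColoring_of_mycielski hn))
end

section
/- For every cyclic permutation [φ] of {1,…,n}, the associated 3-hypergraph H_[φ] is an even 3-hypergraph: every 4-element subset of {1,…,n} contains an even number of edges of H_[φ]. -/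
open scoped Classical

/-- `i < j < k` are in clockwise order with respect to the cyclic permutation `[φ]` of
`Fin n` if some representative `ψ` of the cyclic equivalence class of `φ` (i.e. some
cyclic shift of `φ`) satisfies `ψ⁻¹ i < ψ⁻¹ j < ψ⁻¹ k`. -/
def Clockwise {n : ℕ} (φ : Equiv.Perm (Fin n)) (i j k : Fin n) : Prop :=
  ∃ m : Fin n, φ.symm i + m < φ.symm j + m ∧ φ.symm j + m < φ.symm k + m

/-- The `3`-hypergraph associated to a cyclic permutation `[φ]` of `{1, …, n}`
(encoded as `Fin n`): its edges are the triples `{i, j, k}` with `i < j < k` in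
clockwise order with respect to `[φ]`. -/
noncomputable def cyclicPermHG (n : ℕ) (φ : Equiv.Perm (Fin n)) : ThreeHypergraph (Fin n) where
  verts := Finset.univ
  edges := (Finset.powersetCard 3 (Finset.univ : Finset (Fin n))).filter
    (fun e => ∃ i j k : Fin n, i < j ∧ j < k ∧ Clockwise φ i j k ∧ e = {i, j, k})

/-- A 3-hypergraph is even if every 4-element subset of its vertex set contains an even
number of edges. -/
def ThreeHypergraph.IsEven {α : Type*} [DecidableEq α] (H : ThreeHypergraph α) : Prop :=
  ∀ S ⊆ H.verts, S.card = 4 → Even ((H.edges.filter (fun e => e ⊆ S)).card)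

theorem clockwise_iff {n : ℕ} (φ : Equiv.Perm (Fin n)) (i j k : Fin n) :
    Clockwise φ i j k ↔
      (φ.symm i < φ.symm j ∧ φ.symm j < φ.symm k) ∨
      (φ.symm j < φ.symm k ∧ φ.symm k < φ.symm i) ∨
      (φ.symm k < φ.symm i ∧ φ.symm i < φ.symm j) := by
  unfold Clockwise
  generalize φ.symm i = x
  generalize φ.symm j = y
  generalize φ.symm k = z
  have add_val (u m : Fin n) :
      (u + m).val = if n ≤ u.val + m.val then u.val + m.val - n else u.val + m.val :=
    Fin.val_add_eq_ite u m
  have hx := x.isLt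
  have hy := y.isLt
  have hz := z.isLt
  constructor
  · rintro ⟨m, h₁, h₂⟩
    have hm := m.isLt
    simp only [Fin.lt_def, add_val] at *
    split_ifs at * <;> omega
  · rintro (h | h | h)
    · refine ⟨⟨0, by omega⟩, ?_⟩
      simp only [Fin.lt_def, add_val] at *
      split_ifs <;> omega
    · refine ⟨⟨n - x, by simp only [Fin.lt_def] at h; omega⟩, ?_⟩
      simp only [Fin.lt_def, add_val] at *
      split_ifs <;> omega
    · refine ⟨⟨n - z.val - (x.val - z.val), by simp only [Fin.lt_def] at h; omega⟩, ?_⟩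
      simp only [Fin.lt_def, add_val] at *
      split_ifs <;> omega

/-- An increasing triple is determined by its underlying set. -/
theorem eq_of_triple_eq {α : Type*} [LinearOrder α] {i j k i' j' k' : α}
    (hij : i < j) (hjk : j < k) (hij' : i' < j') (hjk' : j' < k')
    (h : ({i, j, k} : Finset α) = {i', j', k'}) : i = i' ∧ j = j' ∧ k = k' := by
  have mem (x : α) : (x = i ∨ x = j ∨ x = k) ↔ (x = i' ∨ x = j' ∨ x = k') := by
    simpa using Finset.ext_iff.mp h x
  have h₁ := mem i
  have h₂ := mem j
  have h₃ := mem k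
  have h₄ := mem i'
  have h₅ := mem k'
  grind

theorem triple_mem_edges_iff {n : ℕ} (φ : Equiv.Perm (Fin n)) {i j k : Fin n}
    (hij : i < j) (hjk : j < k) :
    ({i, j, k} : Finset (Fin n)) ∈ (cyclicPermHG n φ).edges ↔ Clockwise φ i j k := by
  simp only [cyclicPermHG, Finset.mem_filter, Finset.mem_powersetCard, Finset.subset_univ,
    true_and]
  constructor
  · rintro ⟨-, i', j', k', hij', hjk', hc, h⟩
    convert hc using 1 <;>
    · obtain ⟨h₁, h₂, h₃⟩ := eq_of_triple_eq hij hjk hij' hjk' (by convert h)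
      assumption
  · intro hc
    refine ⟨?_, i, j, k, hij, hjk, hc, rfl⟩
    exact Finset.card_eq_three.mpr ⟨i, j, k, hij.ne, (hij.trans hjk).ne, hjk.ne, rfl⟩

/-- The edges inside a four-element set, listed by increasing triples. -/
theorem filter_edges_subset_eq {n : ℕ} (φ : Equiv.Perm (Fin n)) {a b c d : Fin n}
    (hab : a < b) (hbc : b < c) (hcd : c < d) :
    (cyclicPermHG n φ).edges.filter (fun e => e ⊆ {a, b, c, d}) =
      ({{a, b, c}, {a, b, d}, {a, c, d}, {b, c, d}} : Finset (Finset (Fin n))).filter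
        (fun e => e ∈ (cyclicPermHG n φ).edges) := by
  ext e
  simp only [Finset.mem_filter, Finset.mem_insert, Finset.mem_singleton]
  constructor
  · rintro ⟨he, hs⟩
    refine ⟨?_, he⟩
    simp only [cyclicPermHG, Finset.mem_filter] at he
    obtain ⟨-, i, j, k, hij, hjk, -, rfl⟩ := he
    simp only [Finset.insert_subset_iff, Finset.singleton_subset_iff, Finset.mem_insert,
      Finset.mem_singleton] at hs
    have : (i = a ∧ j = b ∧ k = c) ∨ (i = a ∧ j = b ∧ k = d) ∨
        (i = a ∧ j = c ∧ k = d) ∨ (i = b ∧ j = c ∧ k = d) := by grind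
    rcases this with ⟨rfl, rfl, rfl⟩ | ⟨rfl, rfl, rfl⟩ | ⟨rfl, rfl, rfl⟩ | ⟨rfl, rfl, rfl⟩ <;>
      simp
  · rintro ⟨h, he⟩
    refine ⟨he, ?_⟩
    rcases h with rfl | rfl | rfl | rfl <;> intro x <;> simp <;> tauto

theorem even_card_edges_subset {n : ℕ} (φ : Equiv.Perm (Fin n)) {a b c d : Fin n}
    (hab : a < b) (hbc : b < c) (hcd : c < d) :
    Even ((cyclicPermHG n φ).edges.filter (fun e => e ⊆ {a, b, c, d})).card := by
  have hac := hab.trans hbc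
  have hbd := hbc.trans hcd
  rw [filter_edges_subset_eq φ hab hbc hcd, Finset.card_filter]
  have h₁ : ({a, b, c} : Finset (Fin n)) ∉
      ({{a, b, d}, {a, c, d}, {b, c, d}} : Finset (Finset (Fin n))) := by
    simp only [Finset.mem_insert, Finset.mem_singleton]
    rintro (h | h | h) <;> have := Finset.ext_iff.mp h d <;> simp at this <;> grind
  have h₂ : ({a, b, d} : Finset (Fin n)) ∉
      ({{a, c, d}, {b, c, d}} : Finset (Finset (Fin n))) := by
    simp only [Finset.mem_insert, Finset.mem_singleton]
    rintro (h | h) <;> have := Finset.ext_iff.mp h c <;> simp at this <;> grind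
  have h₃ : ({a, c, d} : Finset (Fin n)) ∉ ({{b, c, d}} : Finset (Finset (Fin n))) := by
    simp only [Finset.mem_singleton]
    intro h
    have := Finset.ext_iff.mp h b
    simp at this
    grind
  rw [Finset.sum_insert h₁, Finset.sum_insert h₂, Finset.sum_insert h₃, Finset.sum_singleton]
  simp only [triple_mem_edges_iff φ hab hbc, triple_mem_edges_iff φ hab hbd,
    triple_mem_edges_iff φ hac hcd, triple_mem_edges_iff φ hbc hcd, clockwise_iff, Fin.lt_def]
  have ne {u v : Fin n} (h : u < v) : (φ.symm u).val ≠ (φ.symm v).val := fun e =>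
    h.ne (φ.symm.injective (Fin.ext e))
  have := ne hab
  have := ne hac
  have := ne (hac.trans hcd)
  have := ne hbc
  have := ne hbd
  have := ne hcd
  rw [Nat.even_iff]
  split_ifs <;> omega

/-- For every cyclic permutation `[φ]` of `{1, …, n}`, the associated 3-hypergraph
`H_[φ]` is even. -/
theorem cyclicPermHG_isEven (n : ℕ) (φ : Equiv.Perm (Fin n)) :
    (cyclicPermHG n φ).IsEven := by
  intro S _ hS
  let f := S.orderEmbOfFin hS
  have hf : S = {f 0, f 1, f 2, f 3} := by
    ext x
    rw [← Finset.mem_coe, ← Finset.range_orderEmbOfFin S hS]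
    simp only [Set.mem_range, Fin.exists_fin_succ, Finset.mem_insert, Finset.mem_singleton,
      IsEmpty.exists_iff, or_false, eq_comm (a := x)]
    rfl
  rw [hf]
  convert even_card_edges_subset φ (f.lt_iff_lt.mpr (by decide : (0 : Fin 4) < 1))
    (f.lt_iff_lt.mpr (by decide : (1 : Fin 4) < 2))
    (f.lt_iff_lt.mpr (by decide : (2 : Fin 4) < 3))
end

section
/- Let H be an even 3-hypergraph with at least two vertices and let v ∈ V(H). Then the chromatic number of H is at most the chromatic number of the link graph of v: χ(H) ≤ χ(link_H(v)). -/
open scoped Classical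

/-- The adjacency relation of the link graph `link_H(v)`: `u` and `w` are adjacent iff
`{v, u, w}` is an edge of `H`. -/
def linkAdj {α : Type*} [DecidableEq α] (H : ThreeHypergraph α) (v u w : α) : Prop :=
  u ≠ w ∧ ({v, u, w} : Finset α) ∈ H.edges

/-- The chromatic number of a simple graph given by a vertex set `V` and an adjacency
relation `Adj`: the least number of colours in a proper vertex colouring. -/
noncomputable def graphChromaticNumber {α : Type*} (V : Finset α) (Adj : α → α → Prop) : ℕ :=
  sInf {k | ∃ c : α → ℕ, (∀ x ∈ V, c x < k) ∧ ∀ u ∈ V, ∀ w ∈ V, Adj u w → c u ≠ c w}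

/-- The clique number of a simple graph given by a vertex set `V` and an adjacency
relation `Adj`: the largest cardinality of a set of pairwise adjacent vertices. -/
noncomputable def graphCliqueNumber {α : Type*} (V : Finset α) (Adj : α → α → Prop) : ℕ :=
  sSup {m | ∃ S : Finset α, S ⊆ V ∧ S.card = m ∧ ∀ u ∈ S, ∀ w ∈ S, u ≠ w → Adj u w}

theorem exists_injOn_lt_card {α : Type*} (V : Finset α) :
    ∃ c : α → ℕ, (∀ x ∈ V, c x < V.card) ∧ Set.InjOn c V := by
  refine ⟨fun x => if h : x ∈ V then V.equivFin ⟨x, h⟩ else 0, fun x hx => ?_, ?_⟩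
  · simp [hx]
  · intro x hx y hy hxy
    have hx' : x ∈ V := hx
    have hy' : y ∈ V := hy
    simpa [hx', hy', Fin.val_inj] using hxy

theorem exists_coloring_graphChromaticNumber {α : Type*} (V : Finset α) (Adj : α → α → Prop)
    (hAdj : ∀ u, ¬ Adj u u) :
    ∃ c : α → ℕ, (∀ x ∈ V, c x < graphChromaticNumber V Adj) ∧
      ∀ u ∈ V, ∀ w ∈ V, Adj u w → c u ≠ c w := by
  refine Nat.sInf_mem (s := {k | ∃ c : α → ℕ, (∀ x ∈ V, c x < k) ∧
    ∀ u ∈ V, ∀ w ∈ V, Adj u w → c u ≠ c w}) ?_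
  obtain ⟨c, hlt, hinj⟩ := exists_injOn_lt_card V
  refine ⟨V.card, c, hlt, fun u hu w hw h hc => ?_⟩
  obtain rfl := hinj hu hw hc
  exact hAdj _ h

theorem linkAdj.ne_left {α : Type*} [DecidableEq α] {H : ThreeHypergraph α} {v u w : α}
    (h : linkAdj H v u w) (hH : H.IsValid) : u ≠ v := by
  rintro rfl
  simpa [h.1] using (hH _ h.2).1

theorem linkAdj.symm {α : Type*} [DecidableEq α] {H : ThreeHypergraph α} {v u w : α}
    (h : linkAdj H v u w) : linkAdj H v w u :=
  ⟨h.1.symm, Finset.pair_comm u w ▸ h.2⟩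

theorem ThreeHypergraph.IsValid.exists_linkAdj_of_mem {α : Type*} [DecidableEq α]
    {H : ThreeHypergraph α} (hH : H.IsValid) {v : α} {e : Finset α} (he : e ∈ H.edges)
    (hve : v ∈ e) : ∃ u ∈ e.erase v, ∃ w ∈ e.erase v, linkAdj H v u w := by
  obtain ⟨u, w, huw, hee⟩ := Finset.card_eq_two.mp
    (show (e.erase v).card = 2 by rw [Finset.card_erase_of_mem hve, (hH e he).1])
  exact ⟨u, by simp [hee], w, by simp [hee], huw, by rwa [← hee, Finset.insert_erase hve]⟩

/-- In an even 3-hypergraph, every edge contains an edge of the link of any vertex `v`. -/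
theorem ThreeHypergraph.IsEven.exists_linkAdj {α : Type*} [DecidableEq α]
    {H : ThreeHypergraph α} (heven : H.IsEven) (hH : H.IsValid) {v : α} (hv : v ∈ H.verts)
    {e : Finset α} (he : e ∈ H.edges) : ∃ u ∈ e, ∃ w ∈ e, linkAdj H v u w := by
  by_cases hve : v ∈ e
  · obtain ⟨u, hu, w, hw, h⟩ := hH.exists_linkAdj_of_mem he hve
    exact ⟨u, Finset.mem_of_mem_erase hu, w, Finset.mem_of_mem_erase hw, h⟩
  by_contra! hno
  have hsingle : H.edges.filter (fun f => f ⊆ insert v e) = {e} := by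
    ext f
    simp only [Finset.mem_filter, Finset.mem_singleton]
    constructor
    · rintro ⟨hf, hfs⟩
      by_cases hvf : v ∈ f
      · obtain ⟨u, hu, w, hw, h⟩ := hH.exists_linkAdj_of_mem hf hvf
        have hsub : f.erase v ⊆ e := Finset.subset_insert_iff.mp hfs
        exact absurd h (hno u (hsub hu) w (hsub hw))
      · exact Finset.eq_of_subset_of_card_le ((Finset.subset_insert_iff_of_notMem hvf).mp hfs)
          (by rw [(hH f hf).1, (hH e he).1])
    · rintro rfl
      exact ⟨he, Finset.subset_insert _ _⟩
  have h := heven (insert v e) (Finset.insert_subset hv (hH e he).2)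
    (by rw [Finset.card_insert_of_notMem hve, (hH e he).1])
  rw [Finset.card_eq_one.mpr ⟨e, by convert hsingle⟩] at h
  exact absurd h (by decide)

/-- For an even 3-hypergraph `H` with at least two vertices and a vertex `v`,
`χ(H) ≤ χ(link_H(v))`. -/
theorem chromaticNumber_le_link {α : Type*} [DecidableEq α] (H : ThreeHypergraph α)
    (hH : H.IsValid) (hcard : 2 ≤ H.verts.card) (heven : H.IsEven)
    (v : α) (hv : v ∈ H.verts) :
    H.chromaticNumber ≤ graphChromaticNumber (H.verts.erase v) (linkAdj H v) := by
  obtain ⟨c, hlt, hc⟩ := exists_coloring_graphChromaticNumber (H.verts.erase v) (linkAdj H v)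
    fun u h => h.1 rfl
  obtain ⟨x, hx, hxv⟩ := Finset.exists_mem_ne hcard v
  refine Nat.sInf_le ⟨fun y => if y = v then c x else c y, fun y hy => ?_, ?_⟩
  · by_cases hyv : y = v
    · simpa [hyv] using hlt x (Finset.mem_erase.mpr ⟨hxv, hx⟩)
    · simpa [hyv] using hlt y (Finset.mem_erase.mpr ⟨hyv, hy⟩)
  · rintro e he ⟨i, hi⟩
    obtain ⟨u, hu, w, hw, hadj⟩ := heven.exists_linkAdj hH hv he
    have huv := hadj.ne_left hH
    have hwv := hadj.symm.ne_left hH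
    have hsub := (hH e he).2
    refine hc u (Finset.mem_erase.mpr ⟨huv, hsub hu⟩) w (Finset.mem_erase.mpr ⟨hwv, hsub hw⟩)
      hadj ?_
    have h1 := hi u hu
    have h2 := hi w hw
    simp only [huv, hwv, if_false] at h1 h2
    rw [h1, h2]
end

section
/- Let H be an even 3-hypergraph with at least two vertices and let v ∈ V(H). Then the clique number of H exceeds that of the link graph of v: ω(link_H(v)) + 1 ≤ ω(H). -/
open scoped Classical

/-- In an even `3`-hypergraph, a clique of the link of `v` together with `v` is a clique. -/
theorem ThreeHypergraph.IsEven.isClique_insert {α : Type*} [DecidableEq α]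
    {H : ThreeHypergraph α} (heven : H.IsEven) (hH : H.IsValid) {v : α} (hv : v ∈ H.verts)
    {S : Finset α} (hS : S ⊆ H.verts.erase v)
    (hadj : ∀ u ∈ S, ∀ w ∈ S, u ≠ w → linkAdj H v u w) : H.IsClique (insert v S) := by
  have hvS : insert v S ⊆ H.verts :=
    Finset.insert_subset hv (hS.trans (Finset.erase_subset _ _))
  have edge_of_mem : ∀ t ⊆ insert v S, t.card = 3 → v ∈ t → t ∈ H.edges := by
    intro t ht hc hvt
    have hcard : (t.erase v).card = 2 := by rw [Finset.card_erase_of_mem hvt, hc]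
    obtain ⟨u, w, huw, he⟩ := Finset.card_eq_two.mp hcard
    have hsub : t.erase v ⊆ S := Finset.subset_insert_iff.mp ht
    rw [← Finset.insert_erase hvt, he]
    exact (hadj u (hsub (by simp [he])) w (hsub (by simp [he])) huw).2
  refine ⟨hvS, fun t ht hc => ?_⟩
  by_cases hvt : v ∈ t
  · exact edge_of_mem t ht hc hvt
  by_contra hte
  have hQ : insert v t ⊆ insert v S := Finset.insert_subset (Finset.mem_insert_self v S) ht
  have hQc : (insert v t).card = 4 := by rw [Finset.card_insert_of_notMem hvt, hc]
  have hfilter : H.edges.filter (fun e => e ⊆ insert v t)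
      = (Finset.powersetCard 3 (insert v t)).erase t := by
    ext e
    simp only [Finset.mem_filter, Finset.mem_erase, Finset.mem_powersetCard]
    constructor
    · rintro ⟨he, hsub⟩
      exact ⟨fun h => hte (h ▸ he), hsub, (hH e he).1⟩
    · rintro ⟨hne, hsub, hec⟩
      refine ⟨edge_of_mem e (hsub.trans hQ) hec ?_, hsub⟩
      by_contra hve
      exact hne (Finset.eq_of_subset_of_card_le
        ((Finset.subset_insert_iff_of_notMem hve).mp hsub) (by rw [hc, hec]))
  have hcount : (H.edges.filter (fun e => e ⊆ insert v t)).card = 3 := by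
    rw [hfilter, Finset.card_erase_of_mem (Finset.mem_powersetCard.mpr
      ⟨Finset.subset_insert v t, hc⟩), Finset.card_powersetCard, hQc]
    rfl
  have h3 : Even 3 := hcount ▸ heven _ (hQ.trans hvS) hQc
  exact absurd h3 (by decide)

/-- For an even 3-hypergraph `H` with at least two vertices and a vertex `v`,
`ω(link_H(v)) + 1 ≤ ω(H)`. -/
theorem link_cliqueNumber_lt {α : Type*} [DecidableEq α] (H : ThreeHypergraph α)
    (hH : H.IsValid) (hcard : 2 ≤ H.verts.card) (heven : H.IsEven)
    (v : α) (hv : v ∈ H.verts) :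
    graphCliqueNumber (H.verts.erase v) (linkAdj H v) + 1 ≤ H.cliqueNumber := by
  obtain ⟨S, hS, hSc, hadj⟩ : graphCliqueNumber (H.verts.erase v) (linkAdj H v) ∈
      {m | ∃ S : Finset α, S ⊆ H.verts.erase v ∧ S.card = m ∧
        ∀ u ∈ S, ∀ w ∈ S, u ≠ w → linkAdj H v u w} := by
    refine Nat.sSup_mem ⟨0, ∅, by simp⟩ ⟨(H.verts.erase v).card, ?_⟩
    rintro m ⟨S, hS, rfl, -⟩
    exact Finset.card_le_card hS
  have hvS : v ∉ S := fun h => Finset.notMem_erase v _ (hS h)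
  refine le_csSup ⟨H.verts.card, ?_⟩
    ⟨insert v S, heven.isClique_insert hH hv hS hadj, ?_⟩
  · rintro m ⟨T, hT, rfl⟩
    exact Finset.card_le_card hT.1
  · rw [Finset.card_insert_of_notMem hvS, hSc]
end

section
/- Let H be a 3-hypergraph with a transitive orientation O(H), and let v ∈ V(H). Define a binary relation on V(H) \ {v} by u → w if and only if (v u w) ∈ O(H). Then this relation orients the edges of the link graph link_H(v) (for each edge {u,w} of link_H(v), exactly one of u → w or w → u holds, and u → w implies {u,w} is an edge of link_H(v)) and is transitive (u₁ → u₂ and u₂ → u₃ imply u₁ → u₃); consequently, link_H(v) is a comparability graph. -/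
open scoped Classical

variable {α : Type*}

/-- A comparability graph (given by a vertex set `V` and an adjacency relation `Adj`):
its edges can be oriented, one direction per edge, so that the resulting relation is
transitive. -/
def IsComparabilityGraph {α : Type*} (V : Finset α) (Adj : α → α → Prop) : Prop :=
  ∃ R : α → α → Prop,
    (∀ u ∈ V, ∀ w ∈ V, R u w → Adj u w) ∧
    (∀ u ∈ V, ∀ w ∈ V, Adj u w → (R u w ↔ ¬ R w u)) ∧
    (∀ u ∈ V, ∀ w ∈ V, ∀ x ∈ V, R u w → R w x → R u x)

/-- Given a transitive orientation `O` of `H` and a vertex `v`, the relation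
`u → w ↔ (v u w) ∈ O` orients the edges of `link_H(v)` and is transitive;
consequently `link_H(v)` is a comparability graph. -/
theorem link_comparability {α : Type*} [DecidableEq α] (H : ThreeHypergraph α)
    (hH : H.IsValid) (O : α → α → α → Prop) (hO : IsTransitiveOrientation H O)
    (v : α) (hv : v ∈ H.verts) :
    (∀ u w : α, O v u w → linkAdj H v u w) ∧
    (∀ u w : α, linkAdj H v u w → (O v u w ↔ ¬ O v w u)) ∧
    (∀ u₁ u₂ u₃ : α, O v u₁ u₂ → O v u₂ u₃ → O v u₁ u₃) ∧
    IsComparabilityGraph (H.verts.erase v) (linkAdj H v) := by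
  obtain ⟨⟨hedge, hrot, hanti⟩, htrans⟩ := hO
  have hadj : ∀ u w : α, O v u w → linkAdj H v u w := by
    refine fun u w h => ⟨?_, hedge v u w h⟩
    rintro rfl
    exact (hanti v u u (hedge v u u h)).mp h h
  have horient : ∀ u w : α, linkAdj H v u w → (O v u w ↔ ¬ O v w u) :=
    fun u w h => hanti v u w h.2
  have hlink : ∀ u₁ u₂ u₃ : α, O v u₁ u₂ → O v u₂ u₃ → O v u₁ u₃ := by
    intro u₁ u₂ u₃ h₁₂ h₂₃
    have h₁ : O u₂ v u₁ := hrot _ _ _ (hrot _ _ _ h₁₂)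
    have h₂ : O u₃ v u₂ := hrot _ _ _ (hrot _ _ _ h₂₃)
    exact hrot _ _ _ (htrans _ _ _ _ h₂ h₁)
  exact ⟨hadj, horient, hlink, O v, fun u _ w _ => hadj u w, fun u _ w _ => horient u w,
    fun u _ w _ x _ => hlink u w x⟩
end

section
/- For all integers q ≥ 2 and r ≥ 1, the winding permutation 3-hypergraph W_{q,r} has clique number ω(W_{q,r}) = q. -/
open scoped Classical

/-- The winding permutation `φ_{q,r}` of `{1, …, n}`, `n = r(q−1)+1`, as a function on
values in `{1, …, n}`: `φ_{q,r}(n) = 1` and, for `1 ≤ i < n` with `i ≡ j (mod r)` and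
`1 ≤ j ≤ r`, `φ_{q,r}(i) = 2 + (q−1)(r−j) + (i−j)/r`. -/
def windingFun (q r i : ℕ) : ℕ :=
  if i = r * (q - 1) + 1 then 1
  else
    let j := if i % r = 0 then r else i % r
    2 + (q - 1) * (r - j) + (i - j) / r

/-- A set of three elements of a linear order can be listed increasingly. -/
theorem Finset.exists_lt_lt_of_card_eq_three {α : Type*} [LinearOrder α] {t : Finset α}
    (ht : t.card = 3) : ∃ i j k, i < j ∧ j < k ∧ t = {i, j, k} := by
  let f := t.orderEmbOfFin ht
  refine ⟨f 0, f 1, f 2, f.strictMono (by decide), f.strictMono (by decide), ?_⟩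
  have h : Finset.univ.image f = t := by
    simp [f]
  rw [← h]
  ext x
  simp [Fin.exists_fin_succ, eq_comm]

/-- The increasing listing of a three-element set is unique. -/
theorem Finset.triple_eq_of_lt {α : Type*} [LinearOrder α] {a b c i j k : α}
    (hab : a < b) (hbc : b < c) (hij : i < j) (hjk : j < k)
    (h : ({a, b, c} : Finset α) = {i, j, k}) : a = i ∧ b = j ∧ c = k := by
  have ha : a ∈ ({i, j, k} : Finset α) := h ▸ by simp
  have hb : b ∈ ({i, j, k} : Finset α) := h ▸ by simp
  have hc : c ∈ ({i, j, k} : Finset α) := h ▸ by simp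
  simp only [Finset.mem_insert, Finset.mem_singleton] at ha hb hc
  grind

/-- If a translate of `a, b, c` is increasing then so is the translate taking `a` to `0`. -/
theorem Fin.sub_lt_sub_of_add_lt_add {n : ℕ} {a b c m : Fin n}
    (hab : a + m < b + m) (hbc : b + m < c + m) : b - a < c - a := by
  obtain _ | n := n
  · exact a.elim0
  rw [← add_sub_add_right_eq_sub b a m, ← add_sub_add_right_eq_sub c a m, Fin.lt_def,
    Fin.sub_val_of_le hab.le, Fin.sub_val_of_le (hab.trans hbc).le]
  simp only [Fin.lt_def] at hab hbc
  omega

theorem cyclicPermHG_mem_edges {n : ℕ} {φ : Equiv.Perm (Fin n)} {i j k : Fin n}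
    (hij : i < j) (hjk : j < k) :
    {i, j, k} ∈ (cyclicPermHG n φ).edges ↔ Clockwise φ i j k := by
  simp only [cyclicPermHG, Finset.mem_filter, Finset.mem_powersetCard, Finset.subset_univ,
    true_and]
  constructor
  · rintro ⟨-, a, b, c, hab, hbc, h, e⟩
    obtain ⟨rfl, rfl, rfl⟩ := Finset.triple_eq_of_lt hij hjk hab hbc e
    exact h
  · intro h
    exact ⟨Finset.card_eq_three.2 ⟨i, j, k, hij.ne, (hij.trans hjk).ne, hjk.ne, rfl⟩,
      i, j, k, hij, hjk, h, rfl⟩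

theorem windingFun_mul_add {q r a b : ℕ} (hb : b < r) (hn : a * r + b < r * (q - 1)) :
    windingFun q r (a * r + b + 1) = 2 + (q - 1) * (r - 1 - b) + a := by
  have hj : (if (a * r + b + 1) % r = 0 then r else (a * r + b + 1) % r) = b + 1 := by
    rw [add_assoc, Nat.mul_add_mod']
    obtain rfl | h := Nat.eq_or_lt_of_le (Nat.succ_le_of_lt hb)
    · simp
    · rw [Nat.mod_eq_of_lt h]
      simp
  rw [windingFun, if_neg (by omega)]
  simp only [hj]
  rw [Nat.add_comm b 1, ← Nat.sub_sub, add_assoc (a * r), Nat.add_comm b 1, Nat.add_sub_cancel,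
    Nat.mul_div_cancel _ (Nat.zero_lt_of_lt hb)]

/-- With `n = r(q - 1) + 1`, the winding permutation inverts `v ↦ rv - 1` modulo `n`;
equivalently `n` divides `φ(p) + (q - 1)(p + 1)`. -/
theorem dvd_winding_add {q r p v : ℕ} (hr : 1 ≤ r) (hp : p < r * (q - 1) + 1)
    (hv : v + 1 = windingFun q r (p + 1)) :
    r * (q - 1) + 1 ∣ v + (q - 1) * (p + 1) := by
  obtain rfl | hlt := Nat.eq_or_lt_of_le (Nat.le_of_lt_succ hp)
  · have hv0 : v = 0 := by simpa [windingFun] using hv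
    rw [hv0, zero_add]
    exact Dvd.intro_left _ rfl
  · have hb := Nat.mod_lt p hr
    have hdiv := Nat.div_add_mod' p r
    generalize p / r = a at hdiv
    generalize p % r = b at hdiv hb
    subst hdiv
    rw [windingFun_mul_add hb hlt] at hv
    refine ⟨a + 1, ?_⟩
    obtain ⟨d, rfl⟩ : ∃ d, r = d + 1 + b := ⟨r - 1 - b, by omega⟩
    rw [show d + 1 + b - 1 - b = d by omega] at hv
    obtain rfl : v = 1 + (q - 1) * d + a := by omega
    ring

/-- The first `q` values occur in the positions `-1, r - 1, 2r - 1, …` -/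
theorem winding_symm_add_one {q r : ℕ} (hr : 1 ≤ r)
    {φ : Equiv.Perm (Fin (r * (q - 1) + 1))}
    (hφ : ∀ i : Fin (r * (q - 1) + 1), ((φ i : ℕ) + 1) = windingFun q r ((i : ℕ) + 1))
    {v : Fin (r * (q - 1) + 1)} (hv : (v : ℕ) ≤ q - 1) :
    ((φ.symm v + 1 : Fin _) : ℕ) = v * r := by
  obtain h | ⟨a, ha⟩ : (v : ℕ) = 0 ∨ ∃ a, (v : ℕ) = a + 1 := by cases (v : ℕ) <;> simp
  · have : φ.symm v = Fin.last _ := by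
      rw [Equiv.symm_apply_eq]
      ext
      have := hφ (Fin.last _)
      simp [windingFun] at this
      simp [this, h]
    rw [this, Fin.last_add_one, h]
    simp
  · have hle : (a + 1) * r ≤ r * (q - 1) := by
      rw [mul_comm]
      exact Nat.mul_le_mul_left r (ha ▸ hv)
    have hlt : a * r + (r - 1) < r * (q - 1) := by
      rw [add_mul] at hle
      omega
    have hsymm : φ.symm v = ⟨a * r + (r - 1), by omega⟩ := by
      rw [Equiv.symm_apply_eq]
      ext
      have := hφ ⟨a * r + (r - 1), by omega⟩
      rw [windingFun_mul_add (by omega) hlt] at this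
      simp only [Nat.sub_self, mul_zero] at this
      omega
    rw [hsymm, Fin.val_add_one_of_lt (by rw [Fin.lt_def]; exact hlt), ha, add_mul]
    simp only
    omega

theorem exists_isClique_winding {q r : ℕ} (hq : 2 ≤ q) (hr : 1 ≤ r)
    {φ : Equiv.Perm (Fin (r * (q - 1) + 1))}
    (hφ : ∀ i : Fin (r * (q - 1) + 1), ((φ i : ℕ) + 1) = windingFun q r ((i : ℕ) + 1)) :
    ∃ S, (cyclicPermHG (r * (q - 1) + 1) φ).IsClique S ∧ S.card = q := by
  have hqn : q - 1 < r * (q - 1) + 1 := Nat.lt_succ_of_le (Nat.le_mul_of_pos_left _ hr)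
  refine ⟨Finset.Iic ⟨q - 1, hqn⟩, ⟨Finset.subset_univ _, fun t hts ht => ?_⟩, ?_⟩
  · obtain ⟨i, j, k, hij, hjk, rfl⟩ := Finset.exists_lt_lt_of_card_eq_three ht
    rw [cyclicPermHG_mem_edges hij hjk]
    have hk : (k : ℕ) ≤ q - 1 := by
      have := hts (show k ∈ _ by simp)
      simpa [Fin.le_def] using this
    rw [Fin.lt_def] at hij hjk
    refine ⟨1, ?_, ?_⟩ <;> rw [Fin.lt_def, winding_symm_add_one hr hφ (by omega),
      winding_symm_add_one hr hφ (by omega)]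
    · exact Nat.mul_lt_mul_of_pos_right hij hr
    · exact Nat.mul_lt_mul_of_pos_right hjk hr
  · rw [Fin.card_Iic]
    simp only
    omega

theorem card_le_of_isClique_winding {q r : ℕ} (hq : 2 ≤ q) (hr : 1 ≤ r)
    {φ : Equiv.Perm (Fin (r * (q - 1) + 1))}
    (hφ : ∀ i : Fin (r * (q - 1) + 1), ((φ i : ℕ) + 1) = windingFun q r ((i : ℕ) + 1))
    {S : Finset (Fin (r * (q - 1) + 1))}
    (hS : (cyclicPermHG (r * (q - 1) + 1) φ).IsClique S) : S.card ≤ q := by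
  obtain rfl | hne := S.eq_empty_or_nonempty
  · simp
  have hmin : ∀ x ∈ S, S.min' hne ≤ x := fun x hx => S.min'_le x hx
  have hminS : S.min' hne ∈ S := S.min'_mem hne
  generalize S.min' hne = v₀ at hmin hminS
  set P : Fin (r * (q - 1) + 1) → Fin (r * (q - 1) + 1) := fun v => φ.symm v - φ.symm v₀ with hP
  have hmono : ∀ x ∈ S, ∀ y ∈ S, x < y → P x ≤ P y := by
    intro x hx y hy hxy
    obtain rfl | h0 := (hmin x hx).eq_or_lt
    · simp [hP]
    have hedge := hS.2 {v₀, x, y} (by simp [Finset.insert_subset_iff, *])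
      (Finset.card_eq_three.2 ⟨_, _, _, h0.ne, (h0.trans hxy).ne, hxy.ne, rfl⟩)
    obtain ⟨m, h₁, h₂⟩ := (cyclicPermHG_mem_edges h0 hxy).1 hedge
    exact (Fin.sub_lt_sub_of_add_lt_add h₁ h₂).le
  -- The level of `v` is the integer `((v - v₀) + (q - 1) P(v)) / n`, which lies in `[0, q)`.
  have hdvd : ∀ x ∈ S, r * (q - 1) + 1 ∣ (x - v₀ : ℕ) + (q - 1) * (P x : ℕ) := by
    intro x hx
    have hx0 : (v₀ : ℕ) ≤ x := hmin x hx
    have h (v) := dvd_winding_add hr (φ.symm v).isLt (hφ (φ.symm v))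
    have h₁ := Int.natCast_dvd_natCast.2 (h x)
    have h₂ := Int.natCast_dvd_natCast.2 (h v₀)
    have h₃ : ((r * (q - 1) + 1 : ℕ) : ℤ) ∣ (P x : ℕ) - ((φ.symm x : ℕ) - (φ.symm v₀ : ℕ)) := by
      rw [hP, Fin.intCast_val_sub_eq_sub_add_ite]
      split_ifs <;> simp
    simp only [Equiv.apply_symm_apply] at h₁ h₂
    rw [← Int.natCast_dvd_natCast]
    refine ((dvd_sub h₁ h₂).add (h₃.mul_left ((q - 1 : ℕ) : ℤ))).trans (dvd_of_eq ?_)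
    push_cast [Nat.cast_sub hx0]
    ring
  let level (v : Fin (r * (q - 1) + 1)) : ℕ :=
    ((v - v₀ : ℕ) + (q - 1) * (P v : ℕ)) / (r * (q - 1) + 1)
  have hlevel : StrictMonoOn level S := by
    intro x hx y hy hxy
    refine Nat.div_lt_div_of_lt_of_dvd (hdvd y hy) ?_
    have h₁ : (P x : ℕ) ≤ P y := hmono x hx y hy hxy
    have h₂ := Nat.mul_le_mul_left (q - 1) h₁
    have h₃ : (v₀ : ℕ) ≤ x := hmin x hx
    rw [Fin.lt_def] at hxy
    omega
  refine (Finset.card_le_card_of_injOn level (fun v _ => ?_) hlevel.injOn).trans_eq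
    (Finset.card_range q)
  simp only [Finset.coe_range, Set.mem_Iio]
  refine Nat.div_lt_of_lt_mul ?_
  have h₁ := Nat.mul_le_mul_left (q - 1) (Nat.le_of_lt_succ (P v).isLt)
  have h₂ := (Nat.sub_le (v : ℕ) v₀).trans_lt v.isLt
  obtain ⟨s, rfl⟩ : ∃ s, q = s + 1 := ⟨q - 1, by omega⟩
  simp only [Nat.add_sub_cancel] at *
  nlinarith

/-- For all `q ≥ 2` and `r ≥ 1`, the winding permutation 3-hypergraph `W_{q,r}`
(the 3-hypergraph associated to the cyclic permutation `[φ_{q,r}]` of `{1, …, n}`,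
`n = r(q−1)+1`, here encoded on `Fin n` with `i ↦ i+1`) has clique number `q`. -/
theorem cliqueNumber_winding (q r : ℕ) (hq : 2 ≤ q) (hr : 1 ≤ r)
    (φ : Equiv.Perm (Fin (r * (q - 1) + 1)))
    (hφ : ∀ i : Fin (r * (q - 1) + 1), ((φ i : ℕ) + 1) = windingFun q r ((i : ℕ) + 1)) :
    (cyclicPermHG (r * (q - 1) + 1) φ).cliqueNumber = q := by
  refine IsGreatest.csSup_eq ⟨exists_isClique_winding hq hr hφ, ?_⟩
  rintro m ⟨S, hS, rfl⟩
  exact card_le_of_isClique_winding hq hr hφ hS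
end

section
/- For all integers q ≥ 2 and r ≥ 1, the winding permutation 3-hypergraph W_{q,r} has chromatic number χ(W_{q,r}) = ⌈n/(r+1)⌉, where n = r(q−1)+1. -/
open scoped Classical

/-- Three elements of `Fin n` can be made increasing by a cyclic shift iff they are in cyclic
order. -/
theorem exists_add_lt_add_iff {n : ℕ} [NeZero n] (x y z : Fin n) :
    (∃ m : Fin n, x + m < y + m ∧ y + m < z + m) ↔
      (x < y ∧ y < z) ∨ (y < z ∧ z < x) ∨ (z < x ∧ x < y) := by
  have hx := x.isLt
  have hy := y.isLt
  have hz := z.isLt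
  simp only [Fin.lt_def, Fin.val_add_eq_ite]
  constructor
  · rintro ⟨m, h⟩
    have hm := m.isLt
    split_ifs at h <;> omega
  · intro h
    rcases Nat.eq_zero_or_pos x.val with hx0 | hx0
    · refine ⟨⟨0, by omega⟩, ?_⟩
      split_ifs <;> simp_all <;> omega
    · refine ⟨⟨n - x.val, by omega⟩, ?_⟩
      simp only
      split_ifs <;> omega

/-- Clockwise order can be tested on the positions moved by one step. -/
theorem clockwise_iff_succ {n : ℕ} [NeZero n] (φ : Equiv.Perm (Fin n)) (i j k : Fin n) :
    Clockwise φ i j k ↔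
      (φ.symm i + 1 < φ.symm j + 1 ∧ φ.symm j + 1 < φ.symm k + 1) ∨
      (φ.symm j + 1 < φ.symm k + 1 ∧ φ.symm k + 1 < φ.symm i + 1) ∨
      (φ.symm k + 1 < φ.symm i + 1 ∧ φ.symm i + 1 < φ.symm j + 1) := by
  rw [← exists_add_lt_add_iff]
  simp only [add_assoc]
  constructor
  · rintro ⟨m, h⟩
    exact ⟨m - 1, by simpa using h⟩
  · rintro ⟨m, h⟩
    exact ⟨1 + m, h⟩

/-- Multiplication by `r` modulo `n` undoes the winding permutation, with positions `1, …, n` and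
values moved to `0, …, n - 1`. -/
theorem mul_windingFun_mod {Q r i v : ℕ} (hr : 1 ≤ r)
    (hv : v + 1 = windingFun (Q + 1) r (i + 1)) :
    r * v % (r * Q + 1) = (i + 1) % (r * Q + 1) := by
  simp only [windingFun, Nat.add_sub_cancel] at hv
  split_ifs at hv with h1 h2
  · obtain rfl : v = 0 := by omega
    simp [h1]
  · obtain ⟨t, ht⟩ := Nat.dvd_of_mod_eq_zero h2
    obtain ⟨t, rfl⟩ : ∃ s, t = s + 1 := Nat.exists_eq_succ_of_ne_zero (by rintro rfl; simp at ht)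
    have h3 : (i + 1 - r) / r = t := by
      rw [ht, mul_add, mul_one, Nat.add_sub_cancel, Nat.mul_div_cancel_left _ hr]
    rw [h3, Nat.sub_self, mul_zero] at hv
    obtain rfl : v = t + 1 := by omega
    rw [ht]
  · have h3 : (i + 1 - (i + 1) % r) / r = (i + 1) / r :=
      Nat.div_eq_sub_mod_div.symm
    rw [h3] at hv
    have h4 := Nat.mod_lt (i + 1) hr
    have h5 := Nat.div_add_mod (i + 1) r
    obtain ⟨s, hs⟩ := Nat.exists_eq_add_of_lt h4
    have h6 : r - (i + 1) % r = s + 1 := by omega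
    rw [h6] at hv
    obtain rfl : v = 1 + Q * (s + 1) + (i + 1) / r := by omega
    have h7 : r * (1 + Q * (s + 1) + (i + 1) / r) = (i + 1) + (r * Q + 1) * (s + 1) := by
      linear_combination h5 + hs
    rw [h7, Nat.add_mul_mod_self_left]

/-- Values whose positions are at most `r` apart differ, modulo `n`, by a multiple of `Q`. -/
theorem eq_add_mul_of_mod_lt_mod {Q r v w : ℕ} (hv : v < r * Q + 1) (hw : w < r * Q + 1)
    (hlt : r * v % (r * Q + 1) < r * w % (r * Q + 1))
    (hle : r * w % (r * Q + 1) ≤ r * v % (r * Q + 1) + r) :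
    v = w + Q * (r * w % (r * Q + 1) - r * v % (r * Q + 1)) ∨
      v + (r * Q + 1) = w + Q * (r * w % (r * Q + 1) - r * v % (r * Q + 1)) := by
  have h1 := Nat.div_add_mod (r * v) (r * Q + 1)
  have h2 := Nat.div_add_mod (r * w) (r * Q + 1)
  generalize r * v % (r * Q + 1) = a at *
  generalize r * w % (r * Q + 1) = b at *
  generalize r * v / (r * Q + 1) = s at *
  generalize r * w / (r * Q + 1) = t at *
  obtain ⟨d, rfl⟩ := Nat.exists_eq_add_of_le hlt.le
  rw [Nat.add_sub_cancel_left]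
  have hd : Q * d ≤ r * Q := by nlinarith
  zify at *
  have key : (v : ℤ) - w - Q * d = (r * Q + 1) * (v - w - Q * s + Q * t) := by
    linear_combination (Q : ℤ) * h1 - (Q : ℤ) * h2
  have hQd : (0 : ℤ) ≤ Q * d := by positivity
  generalize (v : ℤ) - w - Q * s + Q * t = u at key
  have hn : (0 : ℤ) < r * Q + 1 := by positivity
  have hu1 : u < 1 := by
    by_contra! h
    nlinarith
  have hu2 : -2 < u := by
    by_contra! h
    nlinarith
  obtain rfl | rfl : u = 0 ∨ u = -1 := by omega
  · left; linarith
  · right; linarith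

/-- Vertices whose positions lie in a common block of `r + 1` consecutive positions are not in
clockwise order. -/
theorem not_cyclic_of_div_eq {Q r i j k c : ℕ} (hij : i < j) (hjk : j < k) (hk : k < r * Q + 1)
    (hi : r * i % (r * Q + 1) / (r + 1) = c) (hj : r * j % (r * Q + 1) / (r + 1) = c)
    (hk' : r * k % (r * Q + 1) / (r + 1) = c) :
    ¬ ((r * i % (r * Q + 1) < r * j % (r * Q + 1) ∧ r * j % (r * Q + 1) < r * k % (r * Q + 1)) ∨
      (r * j % (r * Q + 1) < r * k % (r * Q + 1) ∧ r * k % (r * Q + 1) < r * i % (r * Q + 1)) ∨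
      (r * k % (r * Q + 1) < r * i % (r * Q + 1) ∧ r * i % (r * Q + 1) < r * j % (r * Q + 1))) := by
  have block : ∀ a b : ℕ, a / (r + 1) = c → b / (r + 1) = c → b ≤ a + r := by
    intro a b ha hb
    have h1 := Nat.div_add_mod a (r + 1)
    have h2 := Nat.div_add_mod b (r + 1)
    have h3 : b % (r + 1) < r + 1 := Nat.mod_lt b (Nat.succ_pos r)
    rw [ha] at h1
    rw [hb] at h2
    omega
  have step : ∀ v w : ℕ, v < r * Q + 1 → w < r * Q + 1 → r * v % (r * Q + 1) / (r + 1) = c →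
      r * w % (r * Q + 1) / (r + 1) = c → r * v % (r * Q + 1) < r * w % (r * Q + 1) →
      (v + Q * (r * v % (r * Q + 1)) = w + Q * (r * w % (r * Q + 1)) ∨
        v + (r * Q + 1) + Q * (r * v % (r * Q + 1)) = w + Q * (r * w % (r * Q + 1))) ∧
      Q * (r * w % (r * Q + 1)) ≤ Q * (r * v % (r * Q + 1)) + r * Q := by
    intro v w hv hw hv' hw' hlt
    have h := eq_add_mul_of_mod_lt_mod hv hw hlt (block _ _ hv' hw')
    have hmul := Nat.mul_le_mul_left Q hlt.le
    have hmul' := Nat.mul_le_mul_left Q (block _ _ hv' hw')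
    rw [mul_add, mul_comm Q r] at hmul'
    rw [Nat.mul_sub] at h
    omega
  have hi0 : i < r * Q + 1 := by omega
  have hj0 : j < r * Q + 1 := by omega
  rintro (⟨h1, h2⟩ | ⟨h1, h2⟩ | ⟨h1, h2⟩)
  · have s1 := step i j hi0 hj0 hi hj h1
    have s2 := step j k hj0 hk hj hk' h2
    have s3 := step i k hi0 hk hi hk' (h1.trans h2)
    have m1 := Nat.mul_le_mul_left Q h1.le
    have m2 := Nat.mul_le_mul_left Q h2.le
    omega
  · have s1 := step j k hj0 hk hj hk' h1
    have s2 := step k i hk hi0 hk' hi h2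
    have s3 := step j i hj0 hi0 hj hi (h1.trans h2)
    have m1 := Nat.mul_le_mul_left Q h1.le
    have m2 := Nat.mul_le_mul_left Q h2.le
    omega
  · have s1 := step k i hk hi0 hk' hi h1
    have s2 := step i j hi0 hj0 hi hj h2
    have s3 := step k j hk hj0 hk' hj (h1.trans h2)
    have m1 := Nat.mul_le_mul_left Q h1.le
    have m2 := Nat.mul_le_mul_left Q h2.le
    omega

/-- If `u < v < w` and `r(v - u)`, `r(w - u)` round up to the same multiple of `n`, then the
positions of `u`, `v`, `w` are in clockwise order. -/
theorem cyclic_of_ceil_eq {n r u v w e : ℕ} (hn : 0 < n) (hr : 1 ≤ r) (huv : u < v) (hvw : v < w)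
    (hne : r * u % n ≠ r * v % n) (hne' : r * u % n ≠ r * w % n)
    (hv : (r * (v - u) + (n - 1)) / n = e) (hw : (r * (w - u) + (n - 1)) / n = e) :
    (r * u % n < r * v % n ∧ r * v % n < r * w % n) ∨
      (r * v % n < r * w % n ∧ r * w % n < r * u % n) ∨
      (r * w % n < r * u % n ∧ r * u % n < r * v % n) := by
  have hu1 := Nat.div_add_mod (r * u) n
  have hv1 := Nat.div_add_mod (r * v) n
  have hw1 := Nat.div_add_mod (r * w) n
  have hu2 := Nat.mod_lt (r * u) hn
  have hv2 := Nat.mod_lt (r * v) hn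
  have hw2 := Nat.mod_lt (r * w) hn
  have hv3 := Nat.div_add_mod (r * (v - u) + (n - 1)) n
  have hw3 := Nat.div_add_mod (r * (w - u) + (n - 1)) n
  have hv4 := Nat.mod_lt (r * (v - u) + (n - 1)) hn
  have hw4 := Nat.mod_lt (r * (w - u) + (n - 1)) hn
  rw [hv] at hv3
  rw [hw] at hw3
  have huv' : r * u < r * v := Nat.mul_lt_mul_of_pos_left huv hr
  have hvw' : r * v < r * w := Nat.mul_lt_mul_of_pos_left hvw hr
  rw [Nat.mul_sub] at hv3 hw3 hv4 hw4
  generalize (r * v - r * u + (n - 1)) % n = x at *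
  generalize (r * w - r * u + (n - 1)) % n = y at *
  generalize r * u % n = a at *
  generalize r * v % n = b at *
  generalize r * w % n = c at *
  generalize r * u / n = A at *
  generalize r * v / n = B at *
  generalize r * w / n = C at *
  have hBC : B ≤ C := by
    by_contra! h
    nlinarith
  have hCB : C ≤ B + 1 := by
    by_contra! h
    have : n * (B + 2) ≤ n * C := Nat.mul_le_mul_left n h
    rw [mul_add] at this
    omega
  have hABe : A + e ≤ B + 1 := by
    by_contra! h
    have : n * (B + 2) ≤ n * (A + e) := Nat.mul_le_mul_left n h
    rw [mul_add, mul_add] at this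
    omega
  have hBAe : B ≤ A + e := by
    by_contra! h
    have : n * (A + e + 1) ≤ n * B := Nat.mul_le_mul_left n h
    rw [mul_add, mul_add] at this
    omega
  have hCAe : C ≤ A + e := by
    by_contra! h
    have : n * (A + e + 1) ≤ n * C := Nat.mul_le_mul_left n h
    rw [mul_add, mul_add] at this
    omega
  obtain rfl | rfl : C = B ∨ C = B + 1 := by omega
  · obtain h | h : A + e = C ∨ A + e = C + 1 := by omega
    · have h' : n * A + n * e = n * C := by rw [← mul_add, h]
      omega
    · have h' : n * A + n * e = n * C + n := by rw [← mul_add, h, mul_add, mul_one]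
      omega
  · have h' : n * A + n * e = n * B + n := by
      rw [← mul_add, show A + e = B + 1 by omega, mul_add, mul_one]
    rw [mul_add] at hw1
    omega

/-- A set of vertices containing no clockwise triple has at most `r + 1` elements. -/
theorem card_le_of_not_cyclic {n r : ℕ} (hr : 1 ≤ r) (S : Finset (Fin n))
    (hinj : ∀ u v : Fin n, r * u % n = r * v % n → u = v)
    (hS : ∀ u ∈ S, ∀ v ∈ S, ∀ w ∈ S, u < v → v < w →
      ¬ ((r * u % n < r * v % n ∧ r * v % n < r * w % n) ∨
        (r * v % n < r * w % n ∧ r * w % n < r * u % n) ∨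
        (r * w % n < r * u % n ∧ r * u % n < r * v % n))) :
    S.card ≤ r + 1 := by
  rcases S.eq_empty_or_nonempty with rfl | hne
  · simp
  set u := S.min' hne
  have huS : u ∈ S := S.min'_mem hne
  have hn : 0 < n := u.pos
  rw [← Finset.card_range (r + 1)]
  have hlt : ∀ v ∈ S, ∀ w ∈ S, v < w →
      (r * ((v : ℕ) - u) + (n - 1)) / n ≠ (r * ((w : ℕ) - u) + (n - 1)) / n := by
    intro v hv w hw hvw heq
    rcases (S.min'_le v hv).eq_or_lt with huv | huv
    · change u = v at huv
      rw [huv, Nat.sub_self, mul_zero, zero_add, Nat.div_eq_of_lt (by omega), eq_comm,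
        Nat.div_eq_zero_iff] at heq
      have : 1 * 1 ≤ r * ((w : ℕ) - v) := Nat.mul_le_mul hr (by omega)
      omega
    · change u < v at huv
      exact hS u huS v hv w hw huv hvw (cyclic_of_ceil_eq hn hr huv hvw
        (fun h => huv.ne (hinj _ _ h)) (fun h => (huv.trans hvw).ne (hinj _ _ h)) heq rfl)
  refine Finset.card_le_card_of_injOn (fun v => (r * ((v : ℕ) - u) + (n - 1)) / n) ?_ ?_
  · intro v _
    have h : r * ((v : ℕ) - u) ≤ r * n := Nat.mul_le_mul_left r (by omega)
    simp only [Finset.coe_range, Set.mem_Iio]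
    rw [Nat.div_lt_iff_lt_mul hn, add_mul]
    omega
  · intro v hv w hw heq
    rcases lt_trichotomy v w with h | h | h
    · exact absurd heq (hlt v hv w hw h)
    · exact h
    · exact absurd heq.symm (hlt w hw v hv h)

/-- For all `q ≥ 2` and `r ≥ 1`, the winding permutation 3-hypergraph `W_{q,r}`
(the 3-hypergraph associated to the cyclic permutation `[φ_{q,r}]` of `{1, …, n}`,
`n = r(q−1)+1`, here encoded on `Fin n` with `i ↦ i+1`) has chromatic number
`⌈n/(r+1)⌉`. -/
theorem chromaticNumber_winding (q r : ℕ) (hq : 2 ≤ q) (hr : 1 ≤ r)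
    (φ : Equiv.Perm (Fin (r * (q - 1) + 1)))
    (hφ : ∀ i : Fin (r * (q - 1) + 1), ((φ i : ℕ) + 1) = windingFun q r ((i : ℕ) + 1)) :
    (cyclicPermHG (r * (q - 1) + 1) φ).chromaticNumber =
      ((r * (q - 1) + 1) + r) / (r + 1) := by
  generalize hQ : q - 1 = Q at *
  obtain rfl : q = Q + 1 := by omega
  have hpos (v : Fin (r * Q + 1)) : ((φ.symm v + 1 : Fin (r * Q + 1)) : ℕ) =
      r * v % (r * Q + 1) := by
    have h := mul_windingFun_mod hr (hφ (φ.symm v))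
    rw [φ.apply_symm_apply] at h
    rw [h, Fin.val_add, Fin.val_one', Nat.add_mod_mod]
  have hinj (u v : Fin (r * Q + 1)) (h : r * u % (r * Q + 1) = r * v % (r * Q + 1)) : u = v := by
    rw [← hpos, ← hpos] at h
    exact φ.symm.injective (add_right_cancel (Fin.ext h))
  have hcw (i j k : Fin (r * Q + 1)) := clockwise_iff_succ φ i j k
  simp only [Fin.lt_def, hpos] at hcw
  apply le_antisymm
  · refine Nat.sInf_le ⟨fun v => r * v % (r * Q + 1) / (r + 1), fun v _ => ?_, ?_⟩
    · have h := Nat.mod_lt (r * v) (Nat.succ_pos (r * Q))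
      rw [Nat.div_lt_iff_lt_mul (Nat.succ_pos r)]
      have h1 := Nat.div_add_mod (r * Q + 1 + r) (r + 1)
      have h2 := Nat.mod_lt (r * Q + 1 + r) (Nat.succ_pos r)
      rw [mul_comm] at h1
      simp only [Nat.succ_eq_add_one] at *
      omega
    · rintro e he ⟨c, hc⟩
      simp only [cyclicPermHG, Finset.mem_filter] at he
      obtain ⟨-, i, j, k, hij, hjk, hclock, rfl⟩ := he
      exact not_cyclic_of_div_eq hij hjk k.isLt (hc i (by simp)) (hc j (by simp))
        (hc k (by simp)) ((hcw i j k).1 hclock)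
  · refine le_csInf ⟨r * Q + 1, fun v => v, fun v _ => v.isLt, ?_⟩ ?_
    · rintro e he ⟨c, hc⟩
      simp only [cyclicPermHG, Finset.mem_filter] at he
      obtain ⟨-, i, j, k, hij, -, -, rfl⟩ := he
      exact hij.ne (Fin.ext ((hc i (by simp)).trans (hc j (by simp)).symm))
    · rintro m ⟨c, hcm, hc⟩
      have hcard := Finset.card_le_mul_card_image_of_maps_to
        (s := (Finset.univ : Finset (Fin (r * Q + 1)))) (t := Finset.range m) (f := c)
        (fun v hv => Finset.mem_range.2 (hcm v hv)) (r + 1) (fun b _ => by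
          refine card_le_of_not_cyclic hr _ hinj fun u hu v hv w hw huv hvw h => ?_
          simp only [Finset.mem_filter, Finset.mem_univ, true_and] at hu hv hw
          refine hc {u, v, w} ?_ ⟨b, by simp [hu, hv, hw]⟩
          simp only [cyclicPermHG, Finset.mem_filter, Finset.mem_powersetCard]
          exact ⟨⟨Finset.subset_univ _, Finset.card_eq_three.2
            ⟨u, v, w, huv.ne, (huv.trans hvw).ne, hvw.ne, rfl⟩⟩,
            u, v, w, huv, hvw, (hcw u v w).2 h, rfl⟩)
      rw [Finset.card_univ, Fintype.card_fin, Finset.card_range] at hcard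
      rw [← Nat.lt_succ_iff, Nat.div_lt_iff_lt_mul (Nat.succ_pos r), Nat.succ_eq_add_one]
      linarith
end

section
/- For every finite family F of closed arcs in the circle, the circle interval 3-hypergraph H_F admits a transitive orientation; that is, every circle interval 3-hypergraph is a comparability 3-hypergraph. -/
open scoped Classical

variable {α : Type*}

/-- A closed arc in the circle `S¹ = ℝ/ℤ`: the image of a closed interval `[a, b]`
(with `a ≤ b`) under the quotient map `ℝ → ℝ/ℤ`. -/
def IsClosedArc (A : Set UnitAddCircle) : Prop :=
  ∃ a b : ℝ, a ≤ b ∧ A = (fun x : ℝ => (x : UnitAddCircle)) '' Set.Icc a b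

/-- The circle interval 3-hypergraph associated to a finite family `F` of subsets of
the circle: vertices are the indices `{1, …, m}`, and the edges are the triples of
indices whose corresponding sets are pairwise disjoint. -/
noncomputable def circleHG (m : ℕ) (F : Fin m → Set UnitAddCircle) :
    ThreeHypergraph (Fin m) where
  verts := Finset.univ
  edges := (Finset.powersetCard 3 (Finset.univ : Finset (Fin m))).filter
    (fun e => ∀ i ∈ e, ∀ j ∈ e, i ≠ j → Disjoint (F i) (F j))

/-- Strict betweenness on the circle, read off from representatives based at the first point. -/
theorem UnitAddCircle.sbtw_coe_iff {p x q : ℝ} :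
    sbtw (p : UnitAddCircle) x q ↔
      toIocMod one_pos p x < toIcoMod one_pos p q := by
  have : btw (p : UnitAddCircle) q x ↔ toIcoMod one_pos p q ≤ toIocMod one_pos p x :=
    QuotientAddGroup.btw_coe_iff
  rw [sbtw_iff_not_btw, btw_cyclic, this, not_le]

/-- An arc that starts strictly between `p` and `q` and avoids `q` stays strictly between them. -/
theorem UnitAddCircle.sbtw_of_mem_image_Icc {a b : ℝ} {p q x : UnitAddCircle}
    (hq : q ∉ (fun t : ℝ => (t : UnitAddCircle)) '' Set.Icc a b)
    (hx : x ∈ (fun t : ℝ => (t : UnitAddCircle)) '' Set.Icc a b)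
    (h : sbtw p (a : UnitAddCircle) q) : sbtw p x q := by
  obtain ⟨t, ⟨hat, htb⟩, rfl⟩ := hx
  induction p using QuotientAddGroup.induction_on with | H p => ?_
  induction q using QuotientAddGroup.induction_on with | H q => ?_
  have h' := UnitAddCircle.sbtw_coe_iff.1 h
  refine UnitAddCircle.sbtw_coe_iff.2 ?_
  set n := toIocDiv one_pos p a with hn
  have ha : toIocMod one_pos p a = a - n := by simp [toIocMod, hn]
  have hpa := left_lt_toIocMod one_pos p a
  have hq1 := toIcoMod_lt_right one_pos p q
  have htq : t - n < toIcoMod one_pos p q := by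
    by_contra! hle
    refine hq ⟨toIcoMod one_pos p q + n, ⟨by linarith, by linarith⟩, ?_⟩
    refine (QuotientAddGroup.eq_iff_sub_mem.2 ?_)
    refine AddSubgroup.mem_zmultiples_iff.2 ⟨n - toIcoDiv one_pos p q, ?_⟩
    simp [toIcoMod]
    ring
  have ht : toIocMod one_pos p t = t - n := by
    refine (toIocMod_eq_iff one_pos).2 ⟨⟨by linarith, by linarith⟩, n, by simp⟩
  rwa [ht]

theorem mem_circleHG_edges {m : ℕ} {F : Fin m → Set UnitAddCircle} (hF : ∀ i, (F i).Nonempty)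
    {u v w : Fin m} :
    ({u, v, w} : Finset (Fin m)) ∈ (circleHG m F).edges ↔
      Disjoint (F u) (F v) ∧ Disjoint (F v) (F w) ∧ Disjoint (F u) (F w) := by
  have hne : ∀ {i j}, Disjoint (F i) (F j) → i ≠ j := by
    rintro i _ h rfl
    exact (hF i).ne_empty (disjoint_self.1 h)
  simp only [circleHG, Finset.mem_filter, Finset.mem_powersetCard, Finset.subset_univ, true_and]
  constructor
  · rintro ⟨hc, h⟩
    have hle : ∀ x y : Fin m, ({x, y} : Finset (Fin m)).card ≠ 3 := fun x y =>
      (Finset.card_le_two.trans_lt (by norm_num)).ne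
    have huv : u ≠ v := by
      rintro rfl
      exact hle u w (by simpa using hc)
    have huw : u ≠ w := by
      rintro rfl
      exact hle v u (by simpa [Finset.insert_comm u v] using hc)
    have hvw : v ≠ w := by
      rintro rfl
      exact hle u v (by simpa using hc)
    exact ⟨h u (by simp) v (by simp) huv, h v (by simp) w (by simp) hvw,
      h u (by simp) w (by simp) huw⟩
  · rintro ⟨huv, hvw, huw⟩
    refine ⟨Finset.card_eq_three.2 ⟨u, v, w, hne huv, hne huw, hne hvw, rfl⟩, ?_⟩
    simp only [Finset.mem_insert, Finset.mem_singleton]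
    rintro i (rfl | rfl | rfl) j (rfl | rfl | rfl) hij <;>
      first | exact absurd rfl hij | assumption | exact Disjoint.symm (by assumption)

/-- Every circle interval 3-hypergraph is a comparability 3-hypergraph. -/
theorem circleHG_comparability (m : ℕ)
    (F : Fin m → Set UnitAddCircle) (hF : ∀ i, IsClosedArc (F i)) :
    IsComparability (circleHG m F) := by
  choose a b hab hFab using hF
  have hmem : ∀ i, (a i : UnitAddCircle) ∈ F i := fun i => by
    rw [hFab i]
    exact ⟨a i, ⟨le_rfl, hab i⟩, rfl⟩
  have hne : ∀ {i j}, Disjoint (F i) (F j) → (a i : UnitAddCircle) ≠ a j := fun {i j} h he =>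
    Set.disjoint_left.1 h (hmem i) (he ▸ hmem j)
  have hedge := @mem_circleHG_edges m F (fun i => ⟨_, hmem i⟩)
  have hstay : ∀ {i j} {p x : UnitAddCircle}, Disjoint (F i) (F j) → x ∈ F i →
      sbtw p (a i : UnitAddCircle) (a j) → sbtw p x (a j) := fun {i j p x} hd hx h => by
    have hj := Set.disjoint_right.1 hd (hmem j)
    rw [hFab i] at hx hj
    exact UnitAddCircle.sbtw_of_mem_image_Icc hj hx h
  refine ⟨fun u v w => ({u, v, w} : Finset (Fin m)) ∈ (circleHG m F).edges ∧
    sbtw (a u : UnitAddCircle) (a v) (a w), ⟨fun u v w h => h.1, ?_, ?_⟩, ?_⟩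
  · rintro u v w ⟨he, hs⟩
    obtain ⟨huv, hvw, huw⟩ := hedge.1 he
    exact ⟨hedge.2 ⟨hvw, huw.symm, huv.symm⟩, hs.cyclic_left⟩
  · intro u v w he
    obtain ⟨huv, hvw, huw⟩ := hedge.1 he
    have he' := hedge.2 ⟨huw, hvw.symm, huv⟩
    simp only [he, he', true_and]
    constructor
    · intro h h'
      exact h.not_sbtw h'.cyclic_left
    · intro h
      rw [← btw_iff_not_sbtw] at h
      refine sbtw_iff_not_btw.2 fun h' => ?_
      rcases h'.antisymm h.cyclic_right with h | h | h
      exacts [hne hvw.symm h, hne huv.symm h, hne huw h]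
  · rintro u v z w ⟨he₁, h₁⟩ ⟨he₂, h₂⟩
    obtain ⟨huv, hvz, huz⟩ := hedge.1 he₁
    obtain ⟨hzv, hvw, hzw⟩ := hedge.1 he₂
    have huw : Disjoint (F u) (F w) := Set.disjoint_left.2 fun x hxu hxw =>
      (hstay huv hxu h₁.cyclic_right).not_sbtw (hstay hzw.symm hxw h₂.cyclic_left)
    refine ⟨hedge.2 ⟨huv, hvw, huw⟩, ?_⟩
    exact (sbtw_trans_right h₂.cyclic_left h₁.cyclic_left).cyclic_right
end
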